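/- arXiv:2010.12665 — 3 statements merged into one kernel-verified Lean document; each statement's English description precedes it below -/
import Mathlib

section
/- There exists a finite set S of 421 points in ℝ² and two points p, q ∈ S with dist(p,q) = 8/√3, such that the unit-distance graph on S is 4-colorable and every proper 4-coloring c of this graph satisfies c p = c q (i.e., {p,q} is a monochromatic pair of length 8/√3). -/
/-!
The points are `point z` for vectors `z` of a rank-four lattice `ℤ⁴`. Since `√33` is irrational,
`432 * ‖point z‖ ^ 2 = a + b * √33` with integers `a` and `b` equals `432` only if `a = 432` and
`b = 0`, and this leaves 30 lattice vectors; unit distance thus becomes a condition on differences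
of integer vectors.

A proper colouring that separates the two poles is a proper colouring of the graph with one more
edge, joining the poles, and this graph has no 4-colouring. Three mutually adjacent points receive
three distinct colours, and a search tree, branching on the colour of one point at a time, does the
rest: on every branch some point loses its last colour once the colours forced by their neighbours
have been propagated. The tree is replayed by computation, with a set of points stored as the bits
of a natural number at positions that are affine in `z`: the neighbours of a set are then obtained
by shifting it by the 30 unit vectors.
-/

namespace MonochromaticPair

section Masks

/-! ### Finite sets as bit masks

The operations below call `Nat.lor` and its kin by name because unfolding the operator `|||` would
double the time of the kernel computation in `isSome_refute_vertices`. -/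

lemma testBit_lor {a b v : ℕ} : (a.lor b).testBit v ↔ a.testBit v ∨ b.testBit v := by
  change (a ||| b).testBit v ↔ _
  rw [Nat.testBit_or, Bool.or_eq_true]

lemma testBit_land {a b v : ℕ} : (a.land b).testBit v ↔ a.testBit v ∧ b.testBit v := by
  change (a &&& b).testBit v ↔ _
  rw [Nat.testBit_and, Bool.and_eq_true]

lemma testBit_shiftLeft {a k v : ℕ} :
    (a.shiftLeft k).testBit v ↔ ∃ w, a.testBit w ∧ v = w + k := by
  change (a <<< k).testBit v ↔ _
  rw [Nat.testBit_shiftLeft, Bool.and_eq_true, decide_eq_true_iff]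
  exact ⟨fun h => ⟨v - k, h.2, by omega⟩, by rintro ⟨w, hw, rfl⟩; simpa using hw⟩

lemma testBit_shiftRight {a k v : ℕ} : (a.shiftRight k).testBit v ↔ a.testBit (v + k) := by
  change (a >>> k).testBit v ↔ _
  rw [Nat.testBit_shiftRight, add_comm]

/-- The difference `a \ b` of two sets stored as bit masks. -/
def maskDiff (a b : ℕ) : ℕ :=
  a.xor (a.land b)

lemma testBit_maskDiff {a b v : ℕ} : (maskDiff a b).testBit v ↔ a.testBit v ∧ ¬ b.testBit v := by
  change (a ^^^ (a &&& b)).testBit v ↔ _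
  rw [Nat.testBit_xor, Nat.testBit_and]
  cases a.testBit v <;> simp

/-- The union of a list of sets stored as bit masks. -/
def maskUnion : List ℕ → ℕ
  | [] => 0
  | d :: D => d.lor (maskUnion D)

lemma testBit_maskUnion {D : List ℕ} {v : ℕ} :
    (maskUnion D).testBit v ↔ ∃ d ∈ D, d.testBit v := by
  induction D with
  | nil => simp [maskUnion]
  | cons d D ih => simp only [maskUnion, testBit_lor, ih, List.exists_mem_cons_iff]

/-- `f n`, written so that the kernel evaluates `n` to a literal before it unfolds `f`: the match
cannot be reduced otherwise. The number matched on carries `n` modulo the prime `2 ^ 61 - 1` in its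
low 64 bits, because kernels hash a literal by these bits only and the low bits of the masks in a
search rarely change. -/
def force {α : Type*} (n : ℕ) (f : ℕ → α) : α :=
  match (n.shiftLeft 64).add (n.mod 2305843009213693951) with
  | 0 => f 0
  | m + 1 => f (m.succ.shiftRight 64)

lemma force_eq {α : Type*} (n : ℕ) (f : ℕ → α) : force n f = f n := by
  have decode {m : ℕ} (hm : (n.shiftLeft 64).add (n.mod 2305843009213693951) = m) :
      m >>> 64 = n := by
    change n <<< 64 + n % 2305843009213693951 = m at hm
    rw [Nat.shiftLeft_eq] at hm
    rw [Nat.shiftRight_eq_div_pow]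
    omega
  unfold force
  split
  case h_1 h => exact congrArg f (decode h)
  case h_2 m h => exact congrArg f (decode h)

/-- `f D`, with all entries of `D` evaluated as in `force`. -/
def forceAll {α : Type*} : List ℕ → (List ℕ → α) → α
  | [], f => f []
  | d :: D, f => force d fun d => forceAll D fun D => f (d :: D)

lemma forceAll_eq {α : Type*} (D : List ℕ) (f : List ℕ → α) : forceAll D f = f D := by
  induction D generalizing f with
  | nil => rfl
  | cons d D ih => rw [forceAll, force_eq, ih]

end Masks

section Refutation

/-! ### Refuting colourings by propagation and branching -/

/-- One round of propagation. `D` lists, colour by colour, the set of vertices that may still have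
this colour, and `o` is the set of vertices that may have a colour treated earlier in the round. A
vertex of `d` outside all other sets is certain to have the colour of `d`, which its neighbours
therefore lose. -/
def propagate (nbr : ℕ → ℕ) (o : ℕ) : List ℕ → List ℕ
  | [] => []
  | d :: D => force (maskDiff d (nbr (maskDiff d (o.lor (maskUnion D))))) fun d' =>
      d' :: propagate nbr (o.lor d') D

/-- The states obtained from `D` by giving the vertex with mask `m` each colour in turn. -/
def branches (m : ℕ) : List ℕ → List (List ℕ)
  | [] => []
  | d :: D => (d :: D.map (maskDiff · m)) :: (branches m D).map (maskDiff d m :: ·)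

/-- Replays a search for a colouring of the vertex set `T`, where `nbr` computes the neighbours of a
set. The certificate lists the branching vertices in preorder. The value is the unused part of the
certificate if every branch ends with a vertex of `T` that has no colour left, and `none`
otherwise; `fuel` bounds the number of rounds on each branch. -/
def refute (nbr : ℕ → ℕ) (T : ℕ) : ℕ → List ℕ → List ℕ → Option (List ℕ)
  | 0, _, _ => none
  | fuel + 1, D, cert =>
    if maskUnion D = T then
      forceAll (propagate nbr 0 D) fun D' =>
        if D' = D then
          match cert with
          | [] => none
          | v :: cert =>
            (branches (2 ^ v) D).foldlM
              (fun cert D => forceAll D fun D => refute nbr T fuel D cert) cert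
        else refute nbr T fuel D' cert
    else some cert

lemma exists_mem_of_forall₂ {α β : Type*} {R : α → β → Prop} {L : List α} {D : List β}
    (h : List.Forall₂ R L D) {a : α} (ha : a ∈ L) : ∃ b ∈ D, R a b := by
  induction h with
  | nil => simp at ha
  | @cons x b L D hxb _ ih =>
    rcases List.mem_cons.1 ha with rfl | ha
    · exact ⟨b, List.mem_cons_self, hxb⟩
    · obtain ⟨b', hb', hab'⟩ := ih ha
      exact ⟨b', List.mem_cons_of_mem _ hb', hab'⟩

lemma exists_isSome_of_foldlM {α β : Type*} {g : β → α → Option β} {l : List α} {b : β}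
    (h : (l.foldlM g b).isSome) {a : α} (ha : a ∈ l) : ∃ b', (g b' a).isSome := by
  induction l generalizing b with
  | nil => simp at ha
  | cons x l ih =>
    rw [List.foldlM_cons] at h
    obtain ⟨b', hb'⟩ : ∃ b', g b x = some b' := by
      cases hx : g b x with
      | none => simp [hx] at h
      | some b' => exact ⟨b', rfl⟩
    rcases List.mem_cons.1 ha with rfl | ha
    · exact ⟨b, by simp [hb']⟩
    · exact ih (by simpa [hb'] using h) ha

variable {κ : Type*} {nbr : ℕ → ℕ} {T : ℕ} {f : ℕ → κ}

/-- `f` is a proper colouring, on the vertex set `T`, of the graph in which `nbr` computes the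
neighbours of a set: only adjacent vertices matter, so `nbr M` may also contain bits that come from
no edge between vertices of `T`. -/
def IsProper (nbr : ℕ → ℕ) (T : ℕ) (f : ℕ → κ) : Prop :=
  ∀ M w, (nbr M).testBit w → ∃ v, M.testBit v ∧ (T.testBit v → T.testBit w → f v ≠ f w)

/-- `d` is a set of candidates for the colour `i`: a subset of `T` containing every vertex of `T`
that `f` colours `i`. -/
def Fits (T : ℕ) (f : ℕ → κ) (i : κ) (d : ℕ) : Prop :=
  ∀ v, (d.testBit v → T.testBit v) ∧ (T.testBit v → f v = i → d.testBit v)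

lemma fits_self (T : ℕ) (f : ℕ → κ) (i : κ) : Fits T f i T :=
  fun _ => ⟨id, fun hv _ => hv⟩

lemma Fits.diff {i : κ} {d b : ℕ} (hd : Fits T f i d)
    (hb : ∀ v, T.testBit v → f v = i → ¬ b.testBit v) : Fits T f i (maskDiff d b) := by
  simp only [Fits, testBit_maskDiff]
  exact fun v => ⟨fun hv => (hd v).1 hv.1, fun hv hvi => ⟨(hd v).2 hv hvi, hb v hv hvi⟩⟩

lemma Fits.diff_two_pow {i : κ} {d v : ℕ} (hd : Fits T f i d) (hv : f v ≠ i) :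
    Fits T f i (maskDiff d (2 ^ v)) :=
  hd.diff fun w _ hwi hvw => by
    rw [Nat.testBit_two_pow, decide_eq_true_iff] at hvw
    exact hv (hvw ▸ hwi)

lemma IsProper.fits_diff (hf : IsProper nbr T f) {i : κ} {d o : ℕ} (hd : Fits T f i d)
    (ho : ∀ v, T.testBit v → f v ≠ i → o.testBit v) :
    Fits T f i (maskDiff d (nbr (maskDiff d o))) := by
  refine hd.diff fun w hw hwi hnbr => ?_
  obtain ⟨v, hv, hvw⟩ := hf _ _ hnbr
  obtain ⟨hvd, hvo⟩ := testBit_maskDiff.1 hv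
  have hvT := (hd v).1 hvd
  exact hvo (ho v hvT fun hvi => hvw hvT hw (hvi.trans hwi.symm))

lemma IsProper.forall₂_fits_propagate (hf : IsProper nbr T f) {L : List κ} {D : List ℕ} {o : ℕ}
    (hD : List.Forall₂ (Fits T f) L D) (hL : ∀ v, T.testBit v → f v ∉ L → o.testBit v) :
    List.Forall₂ (Fits T f) L (propagate nbr o D) := by
  induction hD generalizing o with
  | nil => exact .nil
  | @cons i d L D hd hD ih =>
    have fits : Fits T f i (maskDiff d (nbr (maskDiff d (o.lor (maskUnion D))))) := by
      refine hf.fits_diff hd fun v hv hvi => testBit_lor.2 ?_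
      by_cases hvL : f v ∈ L
      · obtain ⟨d, hd, fits⟩ := exists_mem_of_forall₂ hD hvL
        exact .inr (testBit_maskUnion.2 ⟨d, hd, (fits v).2 hv rfl⟩)
      · exact .inl (hL v hv (by simp [hvi, hvL]))
    rw [propagate, force_eq]
    refine .cons fits (ih fun v hv hvL => testBit_lor.2 ?_)
    by_cases hvi : f v = i
    · exact .inr ((fits v).2 hv hvi)
    · exact .inl (hL v hv (by simp [hvi, hvL]))

lemma exists_mem_branches {L : List κ} {D : List ℕ} {v : ℕ} (hL : L.Nodup) (hv : f v ∈ L)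
    (hD : List.Forall₂ (Fits T f) L D) :
    ∃ D' ∈ branches (2 ^ v) D, List.Forall₂ (Fits T f) L D' := by
  induction hD with
  | nil => simp at hv
  | @cons i d L D hd hD ih =>
    obtain ⟨hiL, hL⟩ := List.nodup_cons.1 hL
    by_cases hvi : f v = i
    · have others : List.Forall₂ (fun j d => j ∈ L ∧ Fits T f j d) L D :=
        (List.forall₂_and_left _ _).2 ⟨fun _ => id, hD⟩
      exact ⟨_, List.mem_cons_self, .cons hd (List.forall₂_map_right_iff.2 (others.imp
        fun j d hd => hd.2.diff_two_pow fun hvj => hiL (hvi ▸ hvj ▸ hd.1)))⟩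
    · obtain ⟨D', hD', fits⟩ := ih hL (by simpa [hvi] using hv)
      exact ⟨_, List.mem_cons_of_mem _ (List.mem_map_of_mem hD'),
        .cons (hd.diff_two_pow hvi) fits⟩

lemma maskUnion_eq_of_forall₂_fits {L : List κ} {D : List ℕ} (hfL : ∀ v, f v ∈ L)
    (hD : List.Forall₂ (Fits T f) L D) : maskUnion D = T := by
  refine Nat.eq_of_testBit_eq fun v =>
    Bool.eq_iff_iff.2 (testBit_maskUnion.trans ⟨?_, fun hv => ?_⟩)
  · rintro ⟨d, hd, hv⟩
    obtain ⟨i, -, fits⟩ := exists_mem_of_forall₂ hD.flip hd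
    exact (fits v).1 hv
  · obtain ⟨d, hd, fits⟩ := exists_mem_of_forall₂ hD (hfL v)
    exact ⟨d, hd, (fits v).2 hv rfl⟩

theorem IsProper.not_forall₂_fits_of_refute (hf : IsProper nbr T f) {L : List κ} (hL : L.Nodup)
    (hfL : ∀ v, f v ∈ L) {fuel : ℕ} {D cert : List ℕ} (h : (refute nbr T fuel D cert).isSome) :
    ¬ List.Forall₂ (Fits T f) L D := by
  intro hD
  induction fuel generalizing D cert with
  | zero => simp [refute] at h
  | succ fuel ih =>
    simp only [refute, maskUnion_eq_of_forall₂_fits hfL hD, if_true, forceAll_eq] at h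
    split_ifs at h
    · match cert with
      | [] => simp at h
      | v :: cert =>
        obtain ⟨D', hD', fits⟩ := exists_mem_branches hL (hfL v) hD
        obtain ⟨cert', h'⟩ := exists_isSome_of_foldlM h hD'
        exact ih h' fits
    · exact ih h (hf.forall₂_fits_propagate hD fun v _ hv => absurd (hfL v) hv)

/-- The candidates for four colours on the vertex set `T` when the vertices `a`, `b`, `c` have the
first, the second and the third colour. -/
def triangleMasks (T a b c : ℕ) : List ℕ :=
  [maskDiff (maskDiff T (2 ^ b)) (2 ^ c), maskDiff (maskDiff T (2 ^ a)) (2 ^ c),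
    maskDiff (maskDiff T (2 ^ a)) (2 ^ b),
    maskDiff (maskDiff (maskDiff T (2 ^ a)) (2 ^ b)) (2 ^ c)]

lemma forall₂_fits_triangleMasks {a b c : ℕ} {i : κ} (h : [f a, f b, f c, i].Nodup) :
    List.Forall₂ (Fits T f) [f a, f b, f c, i] (triangleMasks T a b c) := by
  simp only [List.nodup_cons, List.mem_cons, List.not_mem_nil, or_false, not_or] at h
  obtain ⟨⟨hab, hac, hai⟩, ⟨hbc, hbi⟩, hci, -⟩ := h
  have hT (j : κ) := fits_self T f j
  exact .cons (((hT _).diff_two_pow (Ne.symm hab)).diff_two_pow (Ne.symm hac)) <|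
    .cons (((hT _).diff_two_pow hab).diff_two_pow (Ne.symm hbc)) <|
    .cons (((hT _).diff_two_pow hac).diff_two_pow hbc) <|
    .cons ((((hT _).diff_two_pow hai).diff_two_pow hbi).diff_two_pow hci) .nil

end Refutation

section Lattice

/-! ### Unit distances in a lattice of rank four -/

/-- Integer coordinates of the points of the plane under consideration, see `point`. -/
abbrev Coord : Type := ℤ × ℤ × ℤ × ℤ

/-- The point with lattice coordinates `(s, t, u, v)`. Exchanging `s` with `t` and `u` with `v`
reflects it in the first axis. The basis vectors for `u` and `v` span a triangular lattice of
side `1 / 3`. -/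
noncomputable def point : Coord → EuclideanSpace ℝ (Fin 2)
  | (s, t, u, v) => !₂[((√33 - 1) * (s + t) + 2 * (u + v)) / 12,
      √3 * ((√33 + 3) * (s - t) - 6 * (u - v)) / 36]

/-- The rational part of `432 * ‖point z‖ ^ 2`. -/
def normRat : Coord → ℤ
  | (s, t, u, v) => 3 * (2 * (u + v) - (s + t)) ^ 2 + 99 * (s + t) ^ 2 +
      9 * ((s - t) - 2 * (u - v)) ^ 2 + 33 * (s - t) ^ 2

/-- The coefficient of `√33` in `432 * ‖point z‖ ^ 2`. -/
def normIrrat : Coord → ℤ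
  | (s, t, u, v) => 6 * ((s + t) * (2 * (u + v) - (s + t)) + (s - t) * ((s - t) - 2 * (u - v)))

lemma point_sub (z w : Coord) : point (z - w) = point z - point w := by
  obtain ⟨s, t, u, v⟩ := z
  obtain ⟨s', t', u', v'⟩ := w
  ext i
  fin_cases i <;> simp [point] <;> ring

lemma mul_norm_sq_point (z : Coord) : 432 * ‖point z‖ ^ 2 = normRat z + normIrrat z * √33 := by
  obtain ⟨s, t, u, v⟩ := z
  have h3 : √3 ^ 2 = 3 := Real.sq_sqrt (by norm_num)
  have h33 : √33 ^ 2 = 33 := Real.sq_sqrt (by norm_num)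
  simp only [EuclideanSpace.real_norm_sq_eq, Fin.sum_univ_two, point, normRat, normIrrat]
  push_cast
  linear_combination ((√33 + 3) * (s - t) - 6 * (u - v)) ^ 2 / 3 * h3 +
    (3 * (s + t) ^ 2 + (s - t) ^ 2 : ℝ) * h33

lemma intCast_add_mul_eq_iff_of_irrational {x : ℝ} (hx : Irrational x) {a b n : ℤ} :
    a + b * x = n ↔ a = n ∧ b = 0 := by
  refine ⟨fun h => ?_, by rintro ⟨rfl, rfl⟩; simp⟩
  have hb : b = 0 := by
    by_contra hb
    exact ((hx.intCast_mul hb).intCast_add a).ne_int n h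
  subst hb
  exact ⟨by simpa using h, rfl⟩

lemma mul_norm_sq_point_eq_iff {z : Coord} {n : ℤ} :
    432 * ‖point z‖ ^ 2 = n ↔ normRat z = n ∧ normIrrat z = 0 := by
  have irrational : Irrational √33 := by norm_num
  rw [mul_norm_sq_point, intCast_add_mul_eq_iff_of_irrational irrational]

lemma sq_le_normRat (s t u v : ℤ) :
    3 * (2 * (u + v) - (s + t)) ^ 2 ≤ normRat (s, t, u, v) ∧
      99 * (s + t) ^ 2 ≤ normRat (s, t, u, v) ∧
      9 * ((s - t) - 2 * (u - v)) ^ 2 ≤ normRat (s, t, u, v) ∧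
      33 * (s - t) ^ 2 ≤ normRat (s, t, u, v) := by
  have := sq_nonneg (2 * (u + v) - (s + t))
  have := sq_nonneg (s + t)
  have := sq_nonneg ((s - t) - 2 * (u - v))
  have := sq_nonneg (s - t)
  simp only [normRat]
  omega

lemma eq_zero_of_normRat_eq_zero {z : Coord} (hz : normRat z = 0) : z = 0 := by
  obtain ⟨s, t, u, v⟩ := z
  have hle := sq_le_normRat s t u v
  simp only [hz] at hle
  have eq_zero (a : ℤ) (h : a ^ 2 ≤ 0) : a = 0 := by simpa using h.antisymm (sq_nonneg a)
  have h₁ := eq_zero (2 * (u + v) - (s + t)) (by omega)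
  have h₂ := eq_zero (s + t) (by omega)
  have h₃ := eq_zero ((s - t) - 2 * (u - v)) (by omega)
  have h₄ := eq_zero (s - t) (by omega)
  simp only [Prod.mk_eq_zero]
  omega

lemma point_injective : Function.Injective point := by
  intro z w h
  have hzero := (mul_norm_sq_point_eq_iff (z := z - w) (n := 0)).1 (by simp [point_sub, h])
  exact sub_eq_zero.1 (eq_zero_of_normRat_eq_zero hzero.1)

/-- The lattice coordinates of the 30 unit vectors, up to sign. -/
def halfUnits : List Coord :=
  [(0, 0, 3, 0), (1, 0, -2, 0), (1, 0, 3, 0), (0, 0, 0, 3), (0, 0, 3, 3), (-1, 1, -3, -2),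
    (0, 1, 0, -2), (-2, 1, -2, 0), (1, 1, 1, 0), (-2, 1, 0, 1), (1, 1, 0, 1), (-1, 1, 2, 3),
    (0, 1, 0, 3), (-1, 2, -1, 0), (-1, 2, 0, 2)]

lemma mem_halfUnits_of_norm_eq_one {z : Coord} (hz : ‖point z‖ = 1) :
    z ∈ halfUnits ∨ -z ∈ halfUnits := by
  obtain ⟨hrat, hirrat⟩ := (mul_norm_sq_point_eq_iff (n := 432)).1 (by rw [hz]; norm_num)
  obtain ⟨s, t, u, v⟩ := z
  have search : ∀ s ∈ Finset.Icc (-2 : ℤ) 2, ∀ t ∈ Finset.Icc (-2 : ℤ) 2,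
      ∀ u ∈ Finset.Icc (-5 : ℤ) 5, ∀ v ∈ Finset.Icc (-5 : ℤ) 5,
      normRat (s, t, u, v) = 432 → normIrrat (s, t, u, v) = 0 →
      (s, t, u, v) ∈ halfUnits ∨ -(s, t, u, v) ∈ halfUnits := by decide +kernel
  have hle := sq_le_normRat s t u v
  simp only [hrat] at hle
  have h₁ := abs_lt_of_sq_lt_sq' (show (2 * (u + v) - (s + t)) ^ 2 < 13 ^ 2 by omega) (by norm_num)
  have h₂ := abs_lt_of_sq_lt_sq' (show (s + t) ^ 2 < 3 ^ 2 by omega) (by norm_num)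
  have h₃ := abs_lt_of_sq_lt_sq' (show (s - t - 2 * (u - v)) ^ 2 < 7 ^ 2 by omega) (by norm_num)
  have h₄ := abs_lt_of_sq_lt_sq' (show (s - t) ^ 2 < 4 ^ 2 by omega) (by norm_num)
  simp only [Finset.mem_Icc] at search
  exact search s (by omega) t (by omega) u (by omega) v (by omega) hrat hirrat

lemma norm_eq_one_of_mem_halfUnits {z : Coord} (hz : z ∈ halfUnits) : ‖point z‖ = 1 := by
  have norm_parts : ∀ z ∈ halfUnits, normRat z = 432 ∧ normIrrat z = 0 := by decide
  have hsq := mul_norm_sq_point_eq_iff.2 (norm_parts z hz)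
  rw [← pow_eq_one_iff_of_nonneg (norm_nonneg _) two_ne_zero]
  push_cast at hsq
  linarith

lemma dist_point_eq_one_iff {z w : Coord} :
    dist (point z) (point w) = 1 ↔ z - w ∈ halfUnits ∨ w - z ∈ halfUnits := by
  rw [dist_eq_norm, ← point_sub]
  refine ⟨fun h => by simpa using mem_halfUnits_of_norm_eq_one h, fun h => ?_⟩
  rcases h with h | h
  · exact norm_eq_one_of_mem_halfUnits h
  · rw [point_sub, norm_sub_rev, ← point_sub]
    exact norm_eq_one_of_mem_halfUnits h

/-- One end of the monochromatic pair; the other end is `-pole`. -/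
def pole : Coord :=
  (0, 0, 4, -4)

lemma dist_poles : dist (point pole) (point (-pole)) = 8 / √3 := by
  have hsq : 432 * ‖point (pole - -pole)‖ ^ 2 = (9216 : ℤ) :=
    mul_norm_sq_point_eq_iff.2 (by decide)
  rw [dist_eq_norm, ← point_sub, ← sq_eq_sq₀ (norm_nonneg _) (by positivity), div_pow,
    Real.sq_sqrt (by norm_num)]
  push_cast at hsq
  linarith

end Lattice

section Configuration

/-! ### The configuration and its colour classes -/

/-- The lattice coordinates of the reflection of a point in the first axis. -/
def reflect : Coord → Coord
  | (s, t, u, v) => (t, s, v, u)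

/-- The closure of a list of points under the half-turn about the origin. -/
def halfTurnOrbits (l : List Coord) : List Coord :=
  l ++ l.map (-·)

/-- The closure of a list of points under the reflection in the first axis. -/
def reflectionOrbits (l : List Coord) : List Coord :=
  l ++ l.map reflect

/-- Representatives of colour class `0` modulo the half-turn and the reflection. -/
def representatives₀ : List Coord :=
  [(0, 0, 1, -1), (0, 0, 1, 1), (0, 0, 2, -2), (0, 0, 3, 1), (0, 0, 3, 3), (1, -1, 0, 0),
    (1, -1, 0, 2), (1, -1, 1, -1), (1, -1, 2, -2), (1, -1, 2, 2), (1, -1, 2, 4), (1, -1, 3, 1),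
    (1, -1, 4, 0), (1, 0, -3, 0), (1, 0, -2, -1), (1, 0, -1, -2), (1, 0, -1, 2), (1, 0, -1, 4),
    (1, 0, 0, 1), (1, 0, 1, 0), (1, 0, 3, 0), (1, 1, 0, -2), (1, 1, 1, -3), (1, 1, 2, 2),
    (2, -2, 3, 1), (2, -1, 0, -1), (2, -1, 4, 1), (2, -1, 5, 0), (2, 0, 1, 1), (2, 0, 2, 0),
    (2, 0, 3, 3)]

/-- Representatives of colour class `1` modulo the half-turn and the reflection. -/
def representatives₁ : List Coord :=
  [(0, 0, 0, 0), (0, 0, 2, 0), (0, 0, 2, 2), (0, 0, 4, -4), (0, 0, 4, 2), (0, 0, 5, 1),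
    (1, -1, -1, 1), (1, -1, 1, 1), (1, -1, 1, 3), (1, -1, 2, 0), (1, -1, 3, 3), (1, 0, -3, -2),
    (1, 0, -2, 1), (1, 0, -1, 0), (1, 0, 0, -3), (1, 0, 0, -1), (1, 0, 0, 3), (1, 0, 1, 2),
    (1, 0, 2, -1), (1, 0, 2, 1), (1, 0, 4, 1), (1, 0, 4, 3), (1, 1, -1, -1), (1, 1, 1, -1),
    (1, 1, 3, 1), (2, -2, 2, 0), (2, -1, -1, 0), (2, -1, 1, -2), (2, -1, 2, -3), (2, -1, 3, 2),
    (2, 0, 0, 0)]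

/-- Representatives of colour class `2` modulo the half-turn. -/
def representatives₂ : List Coord :=
  [(0, 0, 0, 3), (0, 0, 1, 0), (0, 0, 1, 2), (0, 0, 2, -1), (0, 0, 3, 2), (0, 0, 4, -1),
    (0, 0, 4, 1), (0, 0, 5, 4), (0, 1, -2, 0), (0, 1, -2, 2), (0, 1, -1, -1), (0, 1, 0, 2),
    (0, 1, 0, 4), (0, 1, 1, -1), (0, 1, 1, 1), (0, 1, 2, 4), (0, 1, 3, 1), (0, 1, 3, 3),
    (0, 2, 0, 3), (0, 2, 3, 2), (1, -2, -3, -5), (1, -2, -1, -1), (1, -2, 3, 1), (1, -2, 4, 0),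
    (1, -1, -3, -4), (1, -1, -1, -2), (1, -1, 0, 1), (1, -1, 1, -2), (1, -1, 1, 0), (1, -1, 2, 3),
    (1, -1, 3, 2), (1, 0, -2, 0), (1, 0, -1, -3), (1, 0, 0, 0), (1, 0, 0, 2), (1, 0, 1, -1),
    (1, 0, 2, -4), (1, 0, 2, 2), (1, 0, 2, 4), (1, 0, 3, 1), (1, 1, -2, -3), (1, 1, -1, 2),
    (1, 1, 0, 1), (2, -2, 0, -1), (2, -2, 0, 1), (2, -1, -2, -2), (2, -1, 2, 0), (2, -1, 3, -1),
    (2, 0, -1, 0), (2, 0, 2, 1)]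

/-- The classes of a proper 4-colouring of the configuration. The colouring is invariant under the
half-turn, and the reflection exchanges the colours `2` and `3`. -/
def colorClass : Fin 4 → List Coord
  | 0 => reflectionOrbits (halfTurnOrbits representatives₀)
  | 1 => reflectionOrbits (halfTurnOrbits representatives₁)
  | 2 => halfTurnOrbits representatives₂
  | 3 => (halfTurnOrbits representatives₂).map reflect

/-- The lattice coordinates of the points of the configuration, with repetitions. -/
def vertices : List Coord :=
  (List.finRange 4).flatMap colorClass

/-- The set of 421 points containing the monochromatic pair. -/
def configuration : Set (EuclideanSpace ℝ (Fin 2)) :=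
  point '' {z | z ∈ vertices}

lemma mem_vertices {z : Coord} : z ∈ vertices ↔ ∃ i, z ∈ colorClass i := by
  simp [vertices]

lemma ncard_configuration : configuration.ncard = 421 := by
  have card_vertices : vertices.toFinset.card = 421 := by decide +kernel
  rw [configuration, Set.ncard_image_of_injective _ point_injective, ← List.coe_toFinset,
    Set.ncard_coe_finset, card_vertices]

lemma pole_mem_vertices : pole ∈ vertices := by
  decide +kernel

lemma neg_pole_mem_vertices : -pole ∈ vertices := by
  decide +kernel

/-- A box that contains the lattice coordinates of the configuration. -/
def box : Set Coord :=
  Set.Icc (-2, -2, -5, -5) (2, 2, 5, 5)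

lemma mem_box_of_mem_vertices {z : Coord} (hz : z ∈ vertices) : z ∈ box := by
  have bounds : ∀ z ∈ vertices, (-2, -2, -5, -5) ≤ z ∧ z ≤ (2, 2, 5, 5) := by decide +kernel
  exact bounds z hz

end Configuration

section Positions

/-! ### Bit positions of lattice points -/

/-- The mixed-radix code of a lattice vector with nonnegative value, and `0` otherwise. The digits
`u`, `s`, `v`, `t` have weights `1`, `14`, `14 * 7`, `14 * 7 * 14`: differences between a vector of
`box` and the sum of another one with a unit vector are bounded by `13` in `u` and `v` and by `6` in
`s` and `t`, so that the code tells them from `0`. -/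
def code : Coord → ℕ
  | (s, t, u, v) => (14 * s + 1372 * t + u + 98 * v).toNat

/-- The bit position of a point of `box`. -/
def position (z : Coord) : ℕ :=
  code (z + (2, 2, 5, 5))

lemma position_injOn_box : Set.InjOn position box := by
  rintro ⟨s, t, u, v⟩ hz ⟨s', t', u', v'⟩ hw h
  simp only [box, Set.mem_Icc, Prod.mk_le_mk, position, code, Prod.mk.injEq] at *
  omega

lemma position_eq_add_code_iff {z w d : Coord} (hz : z ∈ box) (hw : w ∈ box)
    (hd : d ∈ halfUnits) : position w = position z + code d ↔ w - z = d := by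
  have small : ∀ d ∈ halfUnits, (-2, -2, -3, -3) ≤ d ∧ d ≤ (2, 2, 3, 3) ∧ 0 < code d := by decide
  replace hd := small d hd
  obtain ⟨s, t, u, v⟩ := z
  obtain ⟨s', t', u', v'⟩ := w
  obtain ⟨a, b, c, e⟩ := d
  simp only [box, Set.mem_Icc, Prod.mk_le_mk, position, code, Prod.mk_sub_mk, Prod.mk.injEq] at *
  omega

/-- The set of bit positions of a list of points. -/
def mask (l : List Coord) : ℕ :=
  l.foldr (fun z M => (2 ^ position z).lor M) 0

lemma testBit_mask {l : List Coord} {x : ℕ} :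
    (mask l).testBit x ↔ ∃ z ∈ l, position z = x := by
  induction l with
  | nil => simp [mask]
  | cons z l ih =>
    rw [mask, List.foldr_cons, testBit_lor, ← mask, ih, Nat.testBit_two_pow, decide_eq_true_iff,
      List.exists_mem_cons_iff]

/-- The union of `acc` and of the two translates of `M` by `k` and `-k`. -/
def spread (k M acc : ℕ) : ℕ :=
  (M.shiftLeft k).lor ((M.shiftRight k).lor acc)

lemma testBit_spread {k M acc x : ℕ} :
    (spread k M acc).testBit x ↔
      (∃ y, M.testBit y ∧ (x = y + k ∨ y = x + k)) ∨ acc.testBit x := by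
  simp only [spread, testBit_lor, testBit_shiftLeft, testBit_shiftRight, and_or_left, exists_or,
    exists_eq_right, or_assoc]

lemma testBit_foldr_spread {ks : List ℕ} {M x : ℕ} :
    (ks.foldr (spread · M) 0).testBit x ↔
      ∃ k ∈ ks, ∃ y, M.testBit y ∧ (x = y + k ∨ y = x + k) := by
  induction ks with
  | nil => simp
  | cons k ks ih => rw [List.foldr_cons, testBit_spread, ih, List.exists_mem_cons_iff]

/-- The positions that differ from one in `M` by the code of a unit vector. The fold of
`unitNeighbors_eq` is written out, which makes its evaluation by the kernel four times faster. -/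
def unitNeighbors (M : ℕ) : ℕ :=
  spread 3 M <| spread 12 M <| spread 17 M <| spread 294 M <| spread 297 M <|
  spread 1159 M <| spread 1176 M <| spread 1342 M <| spread 1387 M <| spread 1442 M <|
  spread 1484 M <| spread 1654 M <| spread 1666 M <| spread 2729 M <| spread 2926 M 0

lemma unitNeighbors_eq (M : ℕ) :
    unitNeighbors M = (halfUnits.map code).foldr (spread · M) 0 :=
  rfl

lemma testBit_unitNeighbors {M x : ℕ} :
    (unitNeighbors M).testBit x ↔
      ∃ d ∈ halfUnits, ∃ y, M.testBit y ∧ (x = y + code d ∨ y = x + code d) := by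
  simp only [unitNeighbors_eq, testBit_foldr_spread, List.mem_map, exists_exists_and_eq_and]

end Positions

section Coloring

/-! ### Colourings of the configuration -/

lemma dist_point_ne_one_of_mem_colorClass {i : Fin 4} {z w : Coord} (hz : z ∈ colorClass i)
    (hw : w ∈ colorClass i) : dist (point z) (point w) ≠ 1 := by
  have independent :
      ∀ i, (mask (colorClass i)).land (unitNeighbors (mask (colorClass i))) = 0 := by
    decide +kernel
  have mem_box {z : Coord} (hz : z ∈ colorClass i) : z ∈ box :=
    mem_box_of_mem_vertices (mem_vertices.2 ⟨i, hz⟩)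
  have sub_notMem {z w : Coord} (hz : z ∈ colorClass i) (hw : w ∈ colorClass i) :
      w - z ∉ halfUnits := fun hd => by
    have hzw := (position_eq_add_code_iff (mem_box hz) (mem_box hw) hd).2 rfl
    have hmem : ((mask (colorClass i)).land
        (unitNeighbors (mask (colorClass i)))).testBit (position w) :=
      testBit_land.2 ⟨testBit_mask.2 ⟨w, hw, rfl⟩, testBit_unitNeighbors.2
        ⟨_, hd, _, testBit_mask.2 ⟨z, hz, rfl⟩, .inl hzw⟩⟩
    simp only [independent, Nat.zero_testBit, Bool.false_eq_true] at hmem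
  rw [Ne, dist_point_eq_one_iff]
  exact fun h => h.elim (sub_notMem hw hz) (sub_notMem hz hw)

lemma exists_proper_coloring : ∃ c : EuclideanSpace ℝ (Fin 2) → Fin 4,
    ∀ x ∈ configuration, ∀ y ∈ configuration, dist x y = 1 → c x ≠ c y := by
  have exists_class (x) : ∃ i, x ∈ configuration → x ∈ point '' {z | z ∈ colorClass i} := by
    by_cases hx : x ∈ configuration
    · obtain ⟨z, hz, rfl⟩ := hx
      obtain ⟨i, hi⟩ := mem_vertices.1 hz
      exact ⟨i, fun _ => ⟨z, hi, rfl⟩⟩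
    · exact ⟨0, fun h => absurd h hx⟩
  choose c hc using exists_class
  refine ⟨c, fun x hx y hy hxy hcxy => ?_⟩
  obtain ⟨z, hz, rfl⟩ := hc x hx
  obtain ⟨w, hw, rfl⟩ := hc y hy
  exact dist_point_ne_one_of_mem_colorClass hz (hcxy ▸ hw) hxy

/-- Extends `unitNeighbors` by an edge between the poles, whose positions differ by `776`: this is
the difference of no other two positions in the configuration. -/
def neighbors (M : ℕ) : ℕ :=
  spread 776 M (unitNeighbors M)

lemma eq_position_poles {x : ℕ} (hx : (mask vertices).testBit x)
    (hx' : (mask vertices).testBit (x + 776)) :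
    x = position pole ∧ x + 776 = position (-pole) := by
  have overlap : (mask vertices).land ((mask vertices).shiftRight 776) = 2 ^ position pole := by
    decide +kernel
  have hmem : ((mask vertices).land ((mask vertices).shiftRight 776)).testBit x :=
    testBit_land.2 ⟨hx, testBit_shiftRight.2 hx'⟩
  rw [overlap, Nat.testBit_two_pow, decide_eq_true_iff] at hmem
  exact ⟨hmem.symm, hmem ▸ rfl⟩

lemma isProper_neighbors {κ : Type*} {f : ℕ → κ}
    (hf : ∀ z ∈ vertices, ∀ w ∈ vertices, dist (point z) (point w) = 1 →
      f (position z) ≠ f (position w))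
    (hpoles : f (position pole) ≠ f (position (-pole))) :
    IsProper neighbors (mask vertices) f := by
  intro M x hx
  rw [neighbors, testBit_spread, testBit_unitNeighbors] at hx
  obtain ⟨y, hy, hxy⟩ | ⟨d, hd, y, hy, hxy⟩ := hx <;> refine ⟨y, hy, fun hyT hxT => ?_⟩
  · rcases hxy with rfl | rfl
    · obtain ⟨hp, hq⟩ := eq_position_poles hyT hxT
      rwa [hq, hp]
    · obtain ⟨hp, hq⟩ := eq_position_poles hxT hyT
      rw [hq, hp]
      exact hpoles.symm
  · obtain ⟨z, hz, rfl⟩ := testBit_mask.1 hyT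
    obtain ⟨w, hw, rfl⟩ := testBit_mask.1 hxT
    have hzB := mem_box_of_mem_vertices hz
    have hwB := mem_box_of_mem_vertices hw
    rw [position_eq_add_code_iff hzB hwB hd, position_eq_add_code_iff hwB hzB hd] at hxy
    refine hf z hz w hw (dist_point_eq_one_iff.2 ?_)
    rcases hxy with rfl | rfl
    exacts [.inr hd, .inl hd]

/-- The positions on which a refutation of the 4-colourability of the configuration with the extra
edge branches, found by computer search. -/
def certificate : List ℕ :=
  [3070, 3367, 3364, 6193, 3167, 538, 3264, 5996, 2970, 3256, 1598, 3467, 3170, 1586, 4809, 2970,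
    635, 4512, 1514, 2189, 4936, 4726, 4948, 3264, 3464, 4512, 6293, 3467, 4609, 3170, 3547, 1711,
    4627, 2955, 4651, 6190, 4642, 341, 4327, 1500, 3661, 3464, 1828, 3170, 6193, 3167, 538, 6096,
    3382, 2303, 4512, 2207, 3467, 1989, 1895, 1989, 2207, 4654, 3170, 2973, 2973, 2970, 538, 1686,
    144, 3467, 4512, 635, 3464, 3561, 6390, 6096, 341, 1514, 1728, 5993, 4429, 2207, 6278, 2956,
    652, 3464, 4948, 6293, 3467, 4512, 3170, 3256, 6390, 1825, 3167, 2189, 3364, 538, 6193, 735,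
    144, 2025, 5799, 3661, 3378, 3249, 3170, 5003, 4509, 4231, 4444, 3067, 4706, 2862, 3170, 2873,
    4557, 3170, 1686, 1725, 2862, 1898, 3167, 3467, 4948, 3464, 3170, 3467, 3167, 4806, 2970, 2970,
    2873, 6193, 3464, 3167, 4654, 144, 3467, 4706, 4524, 1711, 1711, 4427, 2092, 735, 4557, 1989,
    4612, 3449, 5020, 3264, 635, 1780, 441, 4934, 4825, 1686, 2107, 256, 4903, 4542, 3378, 3167,
    1686, 2077, 4527, 1709, 2970, 3167, 538, 1783, 2862, 6390, 2873, 538, 4512, 3281, 2987, 256,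
    2207, 4903, 4454, 144, 5882, 256, 1712, 1922, 2970, 1798, 3256, 4327, 256, 3366, 3672, 2970,
    4539, 3672, 3170, 144, 3467, 1794, 3655, 3655, 3661, 2122, 2970, 3655, 3655, 1700, 3655, 3464,
    3167, 1992, 4824, 2025, 3170, 4642, 3655, 3655, 1922, 4824, 1925, 2177, 4557, 2873, 5996, 3236,
    3294, 4330, 4345, 1503, 3264, 2862, 4723, 3294, 1892, 4327, 1514, 3575, 2959, 4509, 4948, 144,
    241, 3252, 3170, 4906, 4848, 2955, 4454, 3561, 3264, 3452, 2862, 3294, 3278, 3467, 4554, 5799,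
    3298, 4429, 3264, 3364, 441, 3464, 3561, 4512, 3067, 3467, 6193, 6390, 3170, 3467, 2105, 3464,
    341, 5020, 1586, 1880, 3285, 3285, 3467, 2080, 1686, 3547, 6193, 3464, 4512, 3467, 735, 1728,
    3464, 4557, 1989, 2873, 4612, 2970, 3655, 3655, 4651, 2970, 3655, 3655, 6293, 4512, 3575, 4740,
    3167, 538, 5996, 2207, 3264, 4948, 3579, 2122, 4837, 3661, 3170, 1977, 2873, 2873, 3367, 3364,
    4609, 3464, 1686, 3467, 3655, 4836, 3655, 3655, 4948, 3464, 1825, 2025, 1911, 3655, 3576, 2862,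
    3156, 3464, 6096, 4609, 6290, 441, 6390, 3170, 1925, 241, 4327, 2025, 3170, 4709, 3561, 2025,
    2122, 3467, 4654, 1783, 6293, 4457, 1880, 3167, 6290, 2970, 5896, 2862, 144, 4330, 4706, 2956,
    3655, 3655, 5034, 3264, 1995, 735, 3379, 5020, 2873, 2956, 4726, 3167, 735, 2189, 4612, 3467,
    3655, 1989, 3167, 1783, 4751, 635, 2970, 4831, 1794, 2862, 2970, 3467, 1586, 6390, 4429, 3256,
    3285, 6390, 3464, 344, 3353, 2077, 5799, 3661, 4837, 5899, 2970, 3170, 4554, 3464, 4906, 3467,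
    3655, 3655, 6290, 3464, 4512, 3661, 3655, 3170, 1989, 5896, 3395, 552, 4526, 3655, 3655, 3655,
    735, 1683, 3655, 3575, 3655, 3655, 4512, 1989, 3264, 3464, 6193, 4612, 3253, 3655, 3655, 3655,
    2025, 3170, 3249, 1922, 2970, 3655, 1700, 3655, 3185, 1703, 1780, 3655, 2970, 3655, 3655, 635,
    5899, 1503, 4851, 3170, 6081, 1514, 1989, 1880, 4412, 2970, 5034, 3264, 1880, 1880, 1880, 2873,
    3467, 3167, 635, 1780, 3170, 4751, 3256, 2970, 5899, 3170, 3067, 3067, 3655, 3467, 4851, 3467,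
    1880, 5899, 1922, 144, 3655, 3467, 244, 3249, 3367, 1880, 4512, 1825, 3467, 4557, 3170, 1825,
    1925, 1810, 4327, 4330, 2970, 4627, 3157, 1780, 3467, 6390, 2970, 4920, 3464, 6096, 3461, 2204,
    4412, 2873, 1828, 4327, 2970, 6293, 3464, 3170, 6193, 3285, 3184, 3381, 1714, 1922, 3249, 2022,
    1503, 2122, 3240, 4651, 2174, 4545, 4545, 1810, 621, 1514, 3237, 5020, 1600, 3256, 3055, 4751,
    1922, 6390, 4612, 3461, 4737, 2862, 3579, 2862, 4642, 3170, 6390, 5896, 4526, 3655, 3655, 3156,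
    3170, 1825, 241, 3264, 6193, 652, 3661, 2970, 1598, 4640, 3067, 3353, 3298, 4936, 6390, 621,
    4726, 3067, 1992, 5031, 3479, 4427, 2862, 4920, 4327, 2873, 6193, 735, 1600, 1500, 2873, 4454,
    3353, 2987, 1713, 4231, 1977, 2970, 1780, 1977, 4724, 3285, 2970, 1825, 3167, 6096, 3467, 2958,
    3067, 3067, 3655, 3464, 2958, 4748, 5020, 2956, 3464, 4709, 1828, 1798, 4642, 5899, 3479, 4642,
    3464, 2025, 1783, 5896, 4834, 229, 2862, 6278, 652, 2009, 652, 3168, 4427, 3184, 4427, 1514,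
    2873, 3170, 1686, 1895, 6390, 4330, 4903, 256, 5003, 1714, 2090, 1686, 4903, 4848, 1895, 4330,
    3664, 1783, 3464, 438, 2959, 2025, 4509, 3152, 1989, 4612, 4512, 438, 144, 4327, 3067, 1686,
    4825, 2970, 5899, 1808, 4851, 1828, 4751, 5020, 6305, 1880, 6390, 6390, 1598, 1686, 2970, 1631,
    2010, 1514, 4848, 3170, 4509, 4806, 1631, 4948, 3182, 2107, 3383, 2090, 3072, 3155, 4545, 3672,
    6093, 3264, 1709, 3170, 1980, 4851, 438, 3467, 3464, 3467, 1783, 3170, 2122, 2022, 4848, 4639,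
    3655, 2879, 3067, 3643, 2025, 4851, 2122, 3170, 3467, 3464, 2873, 4848, 2970, 3655, 3655, 3479,
    1686, 3464, 4612, 4639, 1977, 3252, 2879, 3067, 3655, 4512, 1911, 2091, 3264, 2987, 4806, 3367,
    1880, 4512, 4851, 3464, 2025, 6193, 4557, 3661, 1825, 3167, 3464, 6096, 2970, 3561, 1725, 3672,
    1977, 3467, 6096, 144, 3170, 3264, 3464, 4709, 2077, 3067, 3561, 3394, 3379, 621, 621, 3467,
    3464, 1531, 6390, 2970, 1600, 1709, 4509, 241, 3467, 4609, 3464, 3170, 4639, 3579, 4545, 2122,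
    1631, 3152, 4836, 2204, 5020, 3249, 3467, 2873, 3170, 1686, 4642, 4557, 1892, 3170, 3464, 4642,
    735, 3264, 3253, 3183, 1703, 2025, 1925, 6290, 3464, 2174, 3578, 2970, 3467, 3467, 1989, 1989,
    735, 4612, 3170, 2970, 1989, 2970, 2955, 2943, 3167, 635, 1780, 3170, 1794, 3467, 3170, 2970,
    256, 2956, 3157, 5799, 3377, 3467, 2970, 3377, 1922, 4624, 2873, 1980, 4936, 5899, 1614, 4851,
    3467, 1783, 144, 1614, 4736, 1711, 4327, 3294, 3236, 1711, 3236, 3236, 5799, 4444, 4936, 6390,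
    1883, 3467, 1892, 2025, 1808, 4836, 1995, 4642, 6207, 3379, 3575, 3578, 2970, 635, 4557, 4642,
    4836, 2970, 635, 3467, 144, 3464, 2970, 2873, 4851, 3170, 2122, 3382, 1989, 1811, 4427, 1980,
    47, 144, 621, 1780, 4651, 256, 5882, 3672, 5882, 2107, 3350, 2107, 2956, 3449, 2207, 3672, 4723,
    1700, 2970, 4612, 4231, 6390, 3264, 1898, 3350, 3575, 2955, 6193, 1977, 4542, 1503, 2873, 4806,
    3167, 3264, 1783, 735, 1811, 3285, 1908, 4637, 2873, 3285, 2107, 4612, 2970, 1586, 2090, 3464,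
    4557, 1683, 2207, 3464, 6193, 1922, 3170, 6093, 1503, 635, 4612, 3655, 1614, 1989, 1780, 1922,
    4509, 144, 3655, 2970, 2025, 4654, 3170, 2973, 1686, 4554, 4806, 3256, 1725, 3579, 2204, 3298,
    2090, 2090, 438, 3576, 4806, 4936, 1880, 244, 1683, 2077, 3285, 5899, 4825, 2022, 4557, 3167,
    4851, 438, 2873, 6193, 1614, 2207, 1686, 3467, 1703, 3464, 635, 3575, 3264, 4809, 3661, 3655,
    4726, 635, 5899, 3381, 1698, 4442, 1907, 1780, 2862, 3661, 3661, 2025, 3464, 1783, 6193, 6290,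
    2970, 4231, 4509, 3575, 4612, 2025, 3661, 4557, 4934, 1892, 1586, 2025, 3561, 4651, 2207, 2189,
    3167, 1631, 3547, 3264]

lemma isSome_refute_vertices :
    (force (mask vertices) fun T => refute neighbors T 200
      (triangleMasks T (position 0) (position (0, 0, 3, 0)) (position (0, 0, 3, 3)))
      certificate).isSome := by
  decide +kernel

lemma exists_fourth_color {a b c : Fin 4} (hab : a ≠ b) (hac : a ≠ c) (hbc : b ≠ c) :
    ∃ d, [a, b, c, d].Nodup ∧ ∀ x, x ∈ [a, b, c, d] := by
  decide +revert

lemma position_color_pole_eq {f : ℕ → Fin 4}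
    (hf : ∀ z ∈ vertices, ∀ w ∈ vertices, dist (point z) (point w) = 1 →
      f (position z) ≠ f (position w)) :
    f (position pole) = f (position (-pole)) := by
  by_contra hpoles
  have triangle : 0 ∈ vertices ∧ (0, 0, 3, 0) ∈ vertices ∧ (0, 0, 3, 3) ∈ vertices := by
    decide +kernel
  obtain ⟨h₀, h₁, h₂⟩ := triangle
  obtain ⟨d, nodup, mem_colors⟩ := exists_fourth_color
    (hf _ h₀ _ h₁ (dist_point_eq_one_iff.2 (by decide)))
    (hf _ h₀ _ h₂ (dist_point_eq_one_iff.2 (by decide)))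
    (hf _ h₁ _ h₂ (dist_point_eq_one_iff.2 (by decide)))
  have refuted := isSome_refute_vertices
  rw [force_eq] at refuted
  exact (isProper_neighbors hf hpoles).not_forall₂_fits_of_refute nodup (fun x => mem_colors (f x))
    refuted (forall₂_fits_triangleMasks nodup)

theorem color_pole_eq {c : EuclideanSpace ℝ (Fin 2) → Fin 4}
    (hc : ∀ x ∈ configuration, ∀ y ∈ configuration, dist x y = 1 → c x ≠ c y) :
    c (point pole) = c (point (-pole)) := by
  let f (x : ℕ) : Fin 4 := c (point (Function.invFunOn position box x))
  have hfc {z : Coord} (hz : z ∈ vertices) : f (position z) = c (point z) := by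
    simp only [f, position_injOn_box.leftInvOn_invFunOn (mem_box_of_mem_vertices hz)]
  have hf : ∀ z ∈ vertices, ∀ w ∈ vertices, dist (point z) (point w) = 1 →
      f (position z) ≠ f (position w) := fun z hz w hw hzw => by
    rw [hfc hz, hfc hw]
    exact hc _ ⟨z, hz, rfl⟩ _ ⟨w, hw, rfl⟩ hzw
  rw [← hfc pole_mem_vertices, ← hfc neg_pole_mem_vertices, position_color_pole_eq hf]

end Coloring

end MonochromaticPair

open MonochromaticPair

theorem stmt_3 :
    ∃ S : Set (EuclideanSpace ℝ (Fin 2)), S.Finite ∧ S.ncard = 421 ∧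
      ∃ p ∈ S, ∃ q ∈ S, dist p q = 8 / Real.sqrt 3 ∧
        (∃ c : EuclideanSpace ℝ (Fin 2) → Fin 4, (∀ x ∈ S, ∀ y ∈ S, dist x y = 1 → c x ≠ c y)) ∧
        (∀ c : EuclideanSpace ℝ (Fin 2) → Fin 4, (∀ x ∈ S, ∀ y ∈ S, dist x y = 1 → c x ≠ c y) → c p = c q) := by
  refine ⟨configuration, ?_, ncard_configuration, point pole, ⟨pole, pole_mem_vertices, rfl⟩,
    point (-pole), ⟨-pole, neg_pole_mem_vertices, rfl⟩, dist_poles, exists_proper_coloring,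
    fun c hc => color_pole_eq hc⟩
  exact Set.finite_of_ncard_ne_zero (by simp [ncard_configuration])
end

section
/- There exists a finite set S of 159 points in ℝ² and three points p, q, r ∈ S that are pairwise at distance √7 (forming an equilateral triangle of side √7), such that the unit-distance graph on S is 4-colorable and no proper 4-coloring c of this graph satisfies c p = c q = c r (i.e., {p,q,r} is a non-monochromatic triple with side √7). -/
/-!
The points lie in the ring `ℤ[1/3, ω, α]`, where `ω = (1 + i √3) / 2` and `α = (1 + i √11) / 2`.
Squared norms in it belong to `ℤ[1/3] + ℤ[1/3] τ` with `τ = (1 + √33) / 2`. As `τ` is irrational,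
distances can be compared in integer arithmetic.

Four colours suffice because the ring maps onto the field `𝔽₄` in such a way that the norm reduces,
up to multiples of `τ`, to the norm form of `𝔽₄` over `𝔽₂`; hence no unit vector is mapped to zero.

Conversely, suppose that the triangle of side `√7` is monochromatic. Permuting the colours, we may
give its vertices the colour `0` and two further vertices, which form a unit triangle with one of
them, the colours `1` and `2`. An exhaustive backtracking search shows that this does not extend to
a proper 4-colouring.
-/

section BacktrackingSearch

variable {α : Type*}

/-- The set of positions of `l` at which `p` holds, encoded in binary. -/
def positions (p : α → Bool) : List α → ℕ
  | [] => 0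
  | x :: l => Nat.bit (p x) (positions p l)

theorem testBit_positions (p : α → Bool) (l : List α) (i : ℕ) :
    (positions p l).testBit i = l[i]?.any p := by
  induction l generalizing i with
  | nil => simp [positions]
  | cons x l ih => cases i <;> simp [positions, ih, Nat.testBit_bit_succ]

theorem positions_lt (p : α → Bool) (l : List α) : positions p l < 2 ^ l.length :=
  Nat.lt_pow_two_of_testBit _ fun i hi => by simp [testBit_positions, hi]

/-- The adjacency matrix of the relation `adj` on the list `l`, one bitset per row, with all rows
concatenated into a single number: the rows are its digits in base `2 ^ l.length`. -/
def adjacencyMatrix (adj : α → α → Bool) (l : List α) : ℕ :=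
  Nat.ofDigits (2 ^ l.length) (l.map fun x => positions (adj x) l)

/-- Row `v` of an adjacency matrix `M` of size `n`: the bitset of the neighbours of `v`. -/
def neighbors (n M v : ℕ) : ℕ := M / (2 ^ n) ^ v % 2 ^ n

theorem ofDigits_div_pow_mod {b : ℕ} {L : List ℕ} (hL : ∀ d ∈ L, d < b) (i : ℕ) :
    Nat.ofDigits b L / b ^ i % b = L.getD i 0 := by
  induction L generalizing i with
  | nil => simp
  | cons d L ih =>
    rw [List.forall_mem_cons] at hL
    cases i with
    | zero => simp [Nat.ofDigits_cons, Nat.mod_eq_of_lt hL.1]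
    | succ i =>
      rw [pow_succ', ← Nat.div_div_eq_div_mul,
        Nat.ofDigits_div_eq_ofDigits_tail (by lia) _ (List.forall_mem_cons.2 hL), List.tail_cons,
        ih hL.2, List.getD_cons_succ]

theorem neighbors_adjacencyMatrix (adj : α → α → Bool) (l : List α) (v : ℕ) :
    neighbors l.length (adjacencyMatrix adj l) v = (l.map fun x => positions (adj x) l).getD v 0 :=
  ofDigits_div_pow_mod (by simp [positions_lt]) v

theorem exists_adj_of_testBit_neighbors {adj : α → α → Bool} {l : List α} {u v : ℕ}
    (h : (neighbors l.length (adjacencyMatrix adj l) v).testBit u) :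
    ∃ x y, l[v]? = some x ∧ l[u]? = some y ∧ adj x y := by
  rw [neighbors_adjacencyMatrix, List.getD_eq_getElem?_getD, List.getElem?_map] at h
  cases hv : l[v]? with
  | none => simp [hv] at h
  | some x =>
    cases hu : l[u]? with
    | none => simp [hv, testBit_positions, hu] at h
    | some y => exact ⟨x, y, rfl, rfl, by simpa [hv, testBit_positions, hu] using h⟩

/-- Backtracking search for a proper colouring, with fuel `t`. The bitset `N v` holds the
neighbours of `v`, the bitset `U` the vertices not yet coloured, and `F[i]` the vertices known not
to have colour `i`; `choose` selects the next vertex to be coloured. The value is `true` if the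
search is exhausted without finding a colouring. -/
def refutes (N : ℕ → ℕ) (choose : ℕ → List ℕ → ℕ) : ℕ → ℕ → List ℕ → Bool
  | 0, _, _ => false
  | t + 1, U, F =>
    let v := choose U F
    F.zipIdx.all fun (m, i) =>
      m.testBit v || refutes N choose t (U - 2 ^ v) (F.set i (m ||| N v))

/-- The colouring `c` avoids the colours that are forbidden by `F`. -/
def Respects (c : ℕ → ℕ) (F : List ℕ) : Prop :=
  ∀ i m, F[i]? = some m → ∀ u, m.testBit u → c u ≠ i

variable {N : ℕ → ℕ} {choose : ℕ → List ℕ → ℕ} {c : ℕ → ℕ} {F : List ℕ}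

theorem respects_quadruple {m₀ m₁ m₂ m₃ : ℕ} (h₀ : ∀ u, m₀.testBit u → c u ≠ 0)
    (h₁ : ∀ u, m₁.testBit u → c u ≠ 1) (h₂ : ∀ u, m₂.testBit u → c u ≠ 2)
    (h₃ : ∀ u, m₃.testBit u → c u ≠ 3) : Respects c [m₀, m₁, m₂, m₃] := by
  rintro (_ | _ | _ | _ | i) m hm <;> cases hm <;> assumption

theorem Respects.set_lor (hF : Respects c F) {i m b : ℕ} (hm : F[i]? = some m)
    (hb : ∀ u, b.testBit u → c u ≠ i) : Respects c (F.set i (m ||| b)) := by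
  intro j m' hj u hu
  obtain rfl | hij := eq_or_ne i j
  · obtain ⟨-, rfl⟩ : _ ∧ m ||| b = m' := by simpa [List.getElem?_set] using hj
    rw [Nat.testBit_lor, Bool.or_eq_true] at hu
    exact hu.elim (hF i m hm u) (hb u)
  · exact hF j m' (by rwa [List.getElem?_set_ne hij] at hj) u hu

theorem not_respects_of_refutes (hN : ∀ v u, (N v).testBit u → c u ≠ c v)
    (hlt : ∀ v, c v < F.length) {t U : ℕ} (h : refutes N choose t U F) : ¬ Respects c F := by
  intro hF
  induction t generalizing U F with
  | zero => simp [refutes] at h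
  | succ t ih =>
    simp only [refutes, List.all_eq_true, Bool.or_eq_true] at h
    set v := choose U F
    obtain ⟨m, hm⟩ : ∃ m, F[c v]? = some m := ⟨_, List.getElem?_eq_getElem (hlt v)⟩
    obtain hv | hv := h (m, c v) (List.mk_mem_zipIdx_iff_getElem?.2 hm)
    · exact hF _ _ hm v hv rfl
    · exact ih (by simpa using hlt) hv (hF.set_lor hm (hN v))

/-- The binary logarithm of a positive `m < 2 ^ 2 ^ j` by bisection. The kernel computes it in `j`
steps, whereas `Nat.log2` takes one step per binary digit. -/
def log2Bisect : ℕ → ℕ → ℕ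
  | 0, _ => 0
  | j + 1, m =>
    match m >>> 2 ^ j with
    | 0 => log2Bisect j m
    | q + 1 => 2 ^ j + log2Bisect j (q + 1)

/-- The DSATUR heuristic on `n` vertices: among the vertices in `U` that lie in the most of the
bitsets `F`, the largest one. Numbers below `2 ^ 2 ^ 10` are large enough for 159 vertices and four
colours; an arbitrary choice would not affect the soundness of `refutes`. -/
def mostConstrained (n U : ℕ) (F : List ℕ) : ℕ :=
  -- Bit `j * n + u` of the folded number tells whether `u ∈ U` lies in at least `j` of the bitsets;
  -- the factor of `m` consists of the digits `1` in base `2 ^ n`.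
  log2Bisect 10 (F.foldl (fun L m =>
    L ||| L <<< n &&& m * (2 ^ (n * (F.length + 1)) / (2 ^ n - 1))) U) % n

end BacktrackingSearch

section Lattice

theorem int_add_mul_eq_int_iff {ξ : ℝ} (hξ : Irrational ξ) {a b c : ℤ} :
    a + b * ξ = c ↔ b = 0 ∧ a = c := by
  refine ⟨fun h => ?_, by rintro ⟨rfl, rfl⟩; simp⟩
  obtain rfl | hb := eq_or_ne b 0
  · exact ⟨rfl, by exact_mod_cast (by simpa using h : (a : ℝ) = c)⟩
  · exact absurd h (((hξ.intCast_mul hb).intCast_add a).ne_int c)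

/-- Coordinates `(m, n, k, l)` of the complex number `(m + n ω + k α + l ω α) / 3`, where
`ω = (1 + i √3) / 2` and `α = (1 + i √11) / 2`. -/
abbrev LatticePoint : Type := ℤ × ℤ × ℤ × ℤ

namespace LatticePoint

/-- The point of the plane with the given coordinates. -/
noncomputable def toPlane : LatticePoint →+ EuclideanSpace ℝ (Fin 2) where
  toFun x := match x with
    | (m, n, k, l) =>
      !₂[(4 * m + 2 * n + 2 * k + l - l * √33) / 12, ((2 * n + l) * √3 + (2 * k + l) * √11) / 12]
  map_zero' := by ext i; fin_cases i <;> simp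
  map_add' x y := by ext i; fin_cases i <;> simp <;> ring

/-- With `normTau`, one of the two integers for which `9 ‖x‖² = normInt x + normTau x * τ`, where
`τ = (1 + √33) / 2`. -/
def normInt : LatticePoint → ℤ
  | (m, n, k, l) => m * m + m * n + n * n + 3 * (k * k + k * l + l * l) + m * k + m * l + n * l

/-- The coefficient of `τ = (1 + √33) / 2` in `9 ‖x‖²`. -/
def normTau : LatticePoint → ℤ
  | (m, n, k, l) => n * k - m * l

/-- The computable form of `‖x‖² = r`. -/
abbrev HasNormSq (r : ℕ) (x : LatticePoint) : Prop := normTau x = 0 ∧ normInt x = 9 * r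

theorem nine_mul_norm_toPlane_sq (x : LatticePoint) :
    9 * ‖toPlane x‖ ^ 2 = normInt x + normTau x * ((1 + √33) / 2) := by
  obtain ⟨m, n, k, l⟩ := x
  have h33 : √33 = √3 * √11 := by rw [← Real.sqrt_mul (by norm_num)]; norm_num
  have h3 : √3 ^ 2 = 3 := Real.sq_sqrt (by norm_num)
  have h11 : √11 ^ 2 = 11 := Real.sq_sqrt (by norm_num)
  simp only [EuclideanSpace.real_norm_sq_eq, Fin.sum_univ_two, toPlane, normInt, normTau, h33]
  simp only [AddMonoidHom.coe_mk, ZeroHom.coe_mk, Matrix.cons_val_zero, Matrix.cons_val_one,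
    Matrix.cons_val_fin_one, Int.cast_add, Int.cast_mul, Int.cast_ofNat, Int.cast_sub]
  linear_combination ((2 * n + l) ^ 2 / 16 + l ^ 2 * √11 ^ 2 / 16) * h3 +
    ((2 * k + l) ^ 2 / 16 + 3 * l ^ 2 / 16) * h11

theorem irrational_tau : Irrational ((1 + √33) / 2) := by
  have : Irrational √33 := by norm_num
  simpa using (this.intCast_add 1).div_natCast (m := 2) two_ne_zero

theorem norm_toPlane_eq_sqrt_iff {x : LatticePoint} {r : ℕ} :
    ‖toPlane x‖ = √r ↔ HasNormSq r x := by
  rw [HasNormSq, ← int_add_mul_eq_int_iff irrational_tau, ← nine_mul_norm_toPlane_sq,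
    eq_comm, Real.sqrt_eq_iff_eq_sq r.cast_nonneg (norm_nonneg _)]
  push_cast
  constructor <;> intro h <;> linarith

theorem dist_toPlane_eq_sqrt_iff {x y : LatticePoint} {r : ℕ} :
    dist (toPlane x) (toPlane y) = √r ↔ HasNormSq r (x - y) := by
  rw [dist_eq_norm, ← map_sub, norm_toPlane_eq_sqrt_iff]

theorem dist_toPlane_eq_one_iff {x y : LatticePoint} :
    dist (toPlane x) (toPlane y) = 1 ↔ HasNormSq 1 (x - y) := by
  simpa using dist_toPlane_eq_sqrt_iff (x := x) (y := y) (r := 1)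

theorem toPlane_injective : Function.Injective toPlane := by
  refine (injective_iff_map_eq_zero _).2 fun x hx => ?_
  obtain ⟨hτ, hA⟩ : HasNormSq 0 x := norm_toPlane_eq_sqrt_iff.1 (by simp [hx])
  obtain ⟨m, n, k, l⟩ := x
  have hsum : (4 * m + 2 * n + 2 * k + l) ^ 2 + 33 * l ^ 2 + 3 * (2 * n + l) ^ 2
      + 11 * (2 * k + l) ^ 2 = 0 := by
    simp only [normInt, normTau] at hτ hA
    linear_combination 16 * hA + 8 * hτ
  have hm : 4 * m + 2 * n + 2 * k + l = 0 := by nlinarith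
  have hl : l = 0 := by nlinarith
  have hn : 2 * n + l = 0 := by nlinarith
  have hk : 2 * k + l = 0 := by nlinarith
  simp only [Prod.mk_eq_zero]
  omega

/-- Reduction of the lattice modulo a prime of `ℤ[ω, α]` above `2`, at which `3 = 1` and `α = ω`.
The residue field `𝔽₄ = 𝔽₂(ω)` is represented by coordinates with respect to `1, ω`. -/
def residue : LatticePoint →+ ZMod 2 × ZMod 2 where
  toFun x := match x with
    | (m, n, k, l) => (m + l, n + k + l)
  map_zero' := by simp
  map_add' x y := by ext <;> simp <;> ring

/-- Up to multiples of `τ`, the norm reduces to the norm form of `𝔽₄` over `𝔽₂`. -/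
theorem normInt_cast_zmod_two (x : LatticePoint) :
    (normInt x : ZMod 2) =
      (residue x).1 ^ 2 + (residue x).1 * (residue x).2 + (residue x).2 ^ 2 := by
  obtain ⟨m, n, k, l⟩ := x
  simp only [normInt, residue, AddMonoidHom.coe_mk, ZeroHom.coe_mk]
  push_cast
  generalize (m : ZMod 2) = m, (n : ZMod 2) = n, (k : ZMod 2) = k, (l : ZMod 2) = l
  decide +revert

theorem residue_ne_of_hasNormSq_one {x y : LatticePoint} (h : HasNormSq 1 (x - y)) :
    residue x ≠ residue y := by
  intro hxy
  have h0 : residue (x - y) = 0 := by rw [map_sub, hxy, sub_self]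
  have := normInt_cast_zmod_two (x - y)
  rw [h0, h.2] at this
  revert this
  decide

theorem exists_fourColoring_toPlane : ∃ c : EuclideanSpace ℝ (Fin 2) → Fin 4, ∀ x y,
    dist (toPlane x) (toPlane y) = 1 → c (toPlane x) ≠ c (toPlane y) := by
  let e : ZMod 2 × ZMod 2 ≃ Fin 4 := Fintype.equivFinOfCardEq rfl
  refine ⟨fun p => e (residue (Function.invFun toPlane p)), fun x y h => ?_⟩
  simpa [Function.leftInverse_invFun toPlane_injective _] using
    residue_ne_of_hasNormSq_one (dist_toPlane_eq_one_iff.1 h)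

end LatticePoint
end Lattice

section Vertices

open LatticePoint

/-- The coordinates of the 159 points. The first three form the triangle of side `√7`, and the
fourth and fifth form a unit triangle with the first. The remaining ones are ordered so as to
shorten the search with the heuristic `mostConstrained`. -/
def vertices : List LatticePoint :=
  [(0, 0, 0, 0), (6, 3, 0, 0), (9, -6, 0, 0), (3, 0, 0, 0), (3, -3, 0, 0), (4, 1, 1, 0),
    (3, 0, -1, 2), (8, -1, -1, 0), (2, 2, -1, -1), (5, 1, 1, -1), (7, 1, -2, 0), (6, 0, -1, 1),
    (5, -4, 2, -1), (5, 0, -2, 0), (6, -3, 1, -1), (4, 1, 0, -1), (9, -3, -2, 1), (7, 1, -1, -1),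
    (3, 3, -2, 1), (6, 0, -1, 2), (0, 0, 1, 1), (7, -3, -1, 0), (2, 2, 1, -2), (4, 1, 2, -1),
    (4, -2, -2, 1), (0, 3, 2, -1), (6, -3, -1, -1), (7, -5, 0, 0), (3, -3, 2, -1), (6, 0, 0, -2),
    (4, 2, 1, 0), (5, 2, -1, 2), (7, 0, 0, 1), (5, -2, 0, 1), (4, -2, 1, -2), (7, 0, 1, -1),
    (3, 3, 2, -2), (5, -1, 1, -2), (0, 0, 2, -1), (6, 0, 0, -1), (6, -3, -1, 0), (6, -3, 0, 2),
    (5, 2, -1, 0), (6, 0, 2, -1), (5, -1, 0, 0), (4, 4, 1, -2), (0, 3, 0, 0), (6, 0, 1, 0),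
    (6, 0, 1, -2), (5, -1, 1, -1), (6, 0, -1, -2), (3, 0, 2, -2), (3, 3, 1, 0), (5, -4, -1, 2),
    (8, -1, 0, 0), (1, 1, 0, 0), (6, 3, -1, -1), (2, 2, 2, -1), (5, 2, -2, 1), (5, 2, 2, -1),
    (3, 0, 1, 0), (5, 2, -1, -1), (7, -2, -1, 2), (2, 5, 1, -2), (5, 0, 1, 0), (6, 0, -2, 0),
    (7, -2, -2, 1), (2, 2, 1, -1), (5, -1, 1, 0), (7, -2, 2, -1), (9, -3, 0, 1), (3, 0, -1, -1),
    (9, -3, -1, 2), (9, -3, -2, 2), (5, -1, 1, 1), (7, -2, 1, -2), (5, -1, 0, -1), (6, -3, 1, 1),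
    (5, -4, 1, 1), (4, 1, -1, -1), (8, -1, -2, 1), (7, -2, -2, 0), (7, 1, 0, 0), (7, -2, -1, -1),
    (7, -1, -1, 1), (5, 2, 0, -1), (4, -2, -1, 2), (2, 2, -2, 1), (5, -1, -1, 1), (5, -1, -1, -1),
    (3, 0, 1, -2), (3, 3, 0, -3), (3, 0, -2, 1), (3, 0, -1, 0), (2, 1, 1, -1), (5, -1, -1, 2),
    (9, 0, -2, 1), (3, 3, 0, -1), (6, 0, 1, 1), (4, 1, 1, -2), (9, -6, -2, 1), (7, -2, 1, 1),
    (4, 1, -2, 1), (4, -2, 0, 0), (2, 2, 0, 0), (3, 3, 1, -2), (2, -1, 0, 0), (6, 0, -1, 0),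
    (6, -3, 0, 1), (3, 0, 0, 1), (2, -1, 1, -2), (6, 3, -2, 1), (7, 1, -2, 1), (6, 0, 0, 1),
    (3, 3, -1, -1), (4, -2, 1, 1), (6, -3, -2, 1), (6, 0, -2, 1), (5, -4, 0, 0), (5, 2, 1, -2),
    (2, -1, 2, -1), (4, -2, 1, 0), (5, 2, 1, -1), (4, -2, -1, -1), (7, 0, -1, 0), (9, -3, 0, 0),
    (4, 2, 0, -1), (4, 0, -1, 0), (4, 2, -1, 1), (5, 2, 1, 1), (4, 4, 0, 0), (6, -2, 0, -1),
    (6, -1, -1, 0), (5, 0, 0, -1), (6, -3, 0, 0), (6, 1, 0, -1), (3, 1, 0, -1), (1, 1, 1, -2),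
    (1, 4, 1, -2), (7, -2, -1, 0), (5, -1, -2, 1), (3, 0, 2, -1), (6, -2, -1, 1), (4, 0, 1, -1),
    (3, 0, 1, 1), (5, 2, 0, 0), (3, 3, 0, 0), (4, 0, 0, -2), (4, -2, 2, -1), (5, -1, 2, -1),
    (6, 0, 0, 0), (4, 1, 0, 0), (7, -2, 0, 0), (6, 0, 1, -1), (6, 0, -1, -1), (6, -3, -1, 2),
    (3, -3, 1, 1), (6, -3, 1, 0), (6, 1, -1, 1)]

theorem vertices_nodup : vertices.Nodup := by decide +kernel

/-- The bitset of the indices of the vertices at distance one from the vertex with index `v`. -/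
def vertexNeighbors (v : ℕ) : ℕ :=
  neighbors vertices.length (adjacencyMatrix (fun x y => HasNormSq 1 (x - y)) vertices) v

theorem refutes_vertexNeighbors :
    refutes vertexNeighbors (mostConstrained vertices.length) vertices.length
      (2 ^ vertices.length - 2 ^ 5)
      [vertexNeighbors 0 ||| vertexNeighbors 1 ||| vertexNeighbors 2, vertexNeighbors 3,
        vertexNeighbors 4, 0] := by
  decide +kernel

theorem ne_of_testBit_vertexNeighbors {C : Type*} {c : LatticePoint → C}
    (hc : ∀ x ∈ vertices, ∀ y ∈ vertices, HasNormSq 1 (x - y) → c x ≠ c y) {u v : ℕ}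
    (h : (vertexNeighbors v).testBit u) : c (vertices.getD u 0) ≠ c (vertices.getD v 0) := by
  obtain ⟨x, y, hx, hy, hxy⟩ := exists_adj_of_testBit_neighbors h
  rw [List.getD_eq_getElem?_getD, List.getD_eq_getElem?_getD, hx, hy]
  exact (hc x (List.mem_of_getElem? hx) y (List.mem_of_getElem? hy) (of_decide_eq_true hxy)).symm

theorem exists_perm_eq_zero_one_two : ∀ i j k : Fin 4, i ≠ j → i ≠ k → j ≠ k →
    ∃ σ : Equiv.Perm (Fin 4), σ i = 0 ∧ σ j = 1 ∧ σ k = 2 := by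
  decide

theorem not_monochromatic_triangle {c : LatticePoint → Fin 4}
    (hc : ∀ x ∈ vertices, ∀ y ∈ vertices, HasNormSq 1 (x - y) → c x ≠ c y) :
    ¬ (c (0, 0, 0, 0) = c (6, 3, 0, 0) ∧ c (6, 3, 0, 0) = c (9, -6, 0, 0)) := by
  rintro ⟨hpq, hqr⟩
  have hmem : ∀ x ∈ vertices.take 5, x ∈ vertices := fun x => List.mem_of_mem_take
  obtain ⟨σ, hσ0, hσ1, hσ2⟩ :=
    exists_perm_eq_zero_one_two (c (0, 0, 0, 0)) (c (3, 0, 0, 0)) (c (3, -3, 0, 0))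
    (hc _ (hmem _ (by decide)) _ (hmem _ (by decide)) (by decide))
    (hc _ (hmem _ (by decide)) _ (hmem _ (by decide)) (by decide))
    (hc _ (hmem _ (by decide)) _ (hmem _ (by decide)) (by decide))
  let g (v : ℕ) : ℕ := σ (c (vertices.getD v 0))
  have hg : ∀ v u, (vertexNeighbors v).testBit u → g u ≠ g v := fun v u h =>
    Fin.val_injective.ne (σ.injective.ne (ne_of_testBit_vertexNeighbors hc h))
  have hg0 : g 0 = 0 := congrArg Fin.val hσ0
  have hg1 : g 1 = 0 := congrArg Fin.val (hpq ▸ hσ0)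
  have hg2 : g 2 = 0 := congrArg Fin.val (hqr ▸ hpq ▸ hσ0)
  have hg3 : g 3 = 1 := congrArg Fin.val hσ1
  have hg4 : g 4 = 2 := congrArg Fin.val hσ2
  have hF : Respects g [vertexNeighbors 0 ||| vertexNeighbors 1 ||| vertexNeighbors 2,
      vertexNeighbors 3, vertexNeighbors 4, 0] := by
    refine respects_quadruple (fun u hu => ?_) (fun u hu => (hg 3 u hu).trans_eq hg3)
      (fun u hu => (hg 4 u hu).trans_eq hg4) (by simp)
    simp only [Nat.testBit_lor, Bool.or_eq_true, or_assoc] at hu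
    rcases hu with hu | hu | hu
    · exact (hg 0 u hu).trans_eq hg0
    · exact (hg 1 u hu).trans_eq hg1
    · exact (hg 2 u hu).trans_eq hg2
  exact not_respects_of_refutes hg (fun v => Fin.is_lt _) refutes_vertexNeighbors hF

theorem stmt_9 :
    ∃ S : Set (EuclideanSpace ℝ (Fin 2)), S.Finite ∧ S.ncard = 159 ∧
      ∃ p ∈ S, ∃ q ∈ S, ∃ r ∈ S,
        dist p q = Real.sqrt 7 ∧ dist q r = Real.sqrt 7 ∧ dist p r = Real.sqrt 7 ∧
        (∃ c : EuclideanSpace ℝ (Fin 2) → Fin 4, (∀ x ∈ S, ∀ y ∈ S, dist x y = 1 → c x ≠ c y)) ∧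
        (∀ c : EuclideanSpace ℝ (Fin 2) → Fin 4, (∀ x ∈ S, ∀ y ∈ S, dist x y = 1 → c x ≠ c y) → ¬(c p = c q ∧ c q = c r)) := by
  have hmem : ∀ x ∈ vertices.take 5, toPlane x ∈ toPlane '' {x | x ∈ vertices} :=
    fun x hx => Set.mem_image_of_mem _ (List.mem_of_mem_take hx)
  refine ⟨toPlane '' {x | x ∈ vertices}, vertices.finite_toSet.image _, ?_,
    _, hmem (0, 0, 0, 0) (by decide), _, hmem (6, 3, 0, 0) (by decide),
    _, hmem (9, -6, 0, 0) (by decide), dist_toPlane_eq_sqrt_iff.2 (by decide),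
    dist_toPlane_eq_sqrt_iff.2 (by decide), dist_toPlane_eq_sqrt_iff.2 (by decide), ?_, ?_⟩
  · rw [Set.ncard_image_of_injective _ toPlane_injective, ← List.coe_toFinset,
      Set.ncard_coe_finset, List.toFinset_card_of_nodup vertices_nodup]
    rfl
  · obtain ⟨c, hc⟩ := exists_fourColoring_toPlane
    refine ⟨c, ?_⟩
    rintro _ ⟨x, -, rfl⟩ _ ⟨y, -, rfl⟩
    exact hc x y
  · intro c hc
    refine not_monochromatic_triangle (c := c ∘ toPlane) fun x hx y hy hxy => ?_
    exact hc _ ⟨x, hx, rfl⟩ _ ⟨y, hy, rfl⟩ (dist_toPlane_eq_one_iff.2 hxy)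

end Vertices
end

section
/- There is no function c : ℝ² → Fin 4 such that c x ≠ c y for all x, y ∈ ℝ² with dist(x,y) = 1. Equivalently, the chromatic number of the plane (the minimum number of colors needed to color all points of ℝ² so that any two points at Euclidean distance exactly 1 receive different colors) is at least 5. -/
/-!
A colouring of `ℂ` by four colours in which points at distance `1` differ satisfies ever stronger
constraints, as in de Grey's proof. First, no triangle `{c + u, c + u * ζ, c + u * ζ ^ 2}`, where
`ζ` is a primitive cube root of unity and `‖u‖ = 1`, is monochromatic: otherwise the colouring of a
finite part of a finer lattice cannot be completed. Given this, consider the colouring of the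
hexagonal lattice spanned by `1` and `ζ`, near the origin. One of the three antipodal pairs of
lattice points `±2`, `±2 * ζ`, `±2 * (1 + ζ)` has the colour of the origin. If both `2` and `-2`
have other colours than the origin, then each of the pairs has a single colour.

Now rotate the lattice so that points at distance `2` from the origin move by `1`: a pair that has
the colour of the origin in the rotated lattice forces the corresponding pair of the original
lattice to avoid this colour. Hence `2` and `-2` always have equal colours, that is, points at
distance `4` have the same colour, which is absurd for two points at distance `4` from the origin
and `1` from each other.

The finite parts of the argument propagate the constraints through sets of statements of the form
`f z = j`, starting from the colours that are assumed and branching on a few points. The decimal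
digits of a number code the coordinates of a lattice point, so that translating a point is adding
numbers. A set of statements is coded by the binary digits of a number, so that translating and
intersecting such sets are shifts and bitwise operations, which the kernel does fast.
-/

namespace PlaneColoring

section Search

/-- `f n`, with `n` evaluated first when the kernel computes. The kernel hashes a numeral by its
low 64 bits only, so the numerals it meets carry a checksum there; without it the many large
numerals below that agree in those bits would all collide. -/
def force {α : Type} (n : ℕ) (f : ℕ → α) : α :=
  Nat.rec (f 0) (fun m _ => f ((m + 1) >>> 64)) (n <<< 64 + n % (2 ^ 61 - 1))

theorem force_eq {α : Type} (n : ℕ) (f : ℕ → α) : force n f = f n := by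
  unfold force
  have hshift : (n <<< 64 + n % (2 ^ 61 - 1)) >>> 64 = n := by
    rw [Nat.shiftLeft_eq, Nat.shiftRight_eq_div_pow]
    omega
  generalize n <<< 64 + n % (2 ^ 61 - 1) = t at hshift
  cases t with
  | zero => exact congrArg f hshift
  | succ m => exact congrArg f hshift

/-- `List.foldr` by a bare recursor, which the kernel unfolds much faster. -/
def fold {α β : Type} (f : α → β → β) (b : β) (l : List α) : β :=
  List.rec b (fun a _ c => f a c) l

theorem fold_eq_foldr {α β : Type} (f : α → β → β) (b : β) (l : List α) :
    fold f b l = l.foldr f b := by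
  induction l with
  | nil => rfl
  | cons a l ih => exact congrArg (f a) ih

theorem testBit_fold_or {α : Type} {g : α → ℕ} {X i : ℕ} {l : List α}
    (h : (fold (fun a Y => Y ||| g a) X l).testBit i) :
    X.testBit i ∨ ∃ a ∈ l, (g a).testBit i := by
  rw [fold_eq_foldr] at h
  induction l with
  | nil => exact .inl h
  | cons a l ih =>
    rw [List.foldr_cons, Nat.testBit_or, Bool.or_eq_true] at h
    rcases h with h | h
    · exact (ih h).imp_right fun ⟨c, hc, hi⟩ => ⟨c, List.mem_cons_of_mem _ hc, hi⟩
    · exact .inr ⟨a, List.mem_cons_self, h⟩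

/-- The set `{s * a + i | a < k, i ∈ X}`, sets of numbers being encoded by their binary digits. -/
def stack (k s X : ℕ) : ℕ :=
  fold (fun a Y => Y ||| X <<< (s * a)) 0 (List.range k)

theorem exists_of_testBit_stack {k s X i : ℕ} (h : (stack k s X).testBit i) :
    ∃ a < k, ∃ j, X.testBit j ∧ i = s * a + j := by
  rcases testBit_fold_or h with h | ⟨a, ha, h⟩
  · simp at h
  · rw [Nat.testBit_shiftLeft, Bool.and_eq_true, decide_eq_true_eq] at h
    exact ⟨a, List.mem_range.1 ha, i - s * a, h.2, by omega⟩

/-- The numbers `n + 10 ^ 4 * j` with `j < 4` in which the four decimal digits of `n` are at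
most `6`. -/
def grid : ℕ := stack 4 10000 (stack 7 1000 (stack 7 100 (stack 7 10 (stack 7 1 1))))

/-- `n` has at most four decimal digits, and they are at most `d`. -/
abbrev DigitsLE (d n : ℕ) : Prop := n < 10 ^ 4 ∧ ∀ k < 4, n / 10 ^ k % 10 ≤ d

theorem digitsLE_of_testBit_grid {i : ℕ} (h : grid.testBit i) :
    i / 10 ^ 4 < 4 ∧ DigitsLE 6 (i % 10 ^ 4) := by
  obtain ⟨j, hj, i₄, h, hi₄⟩ := exists_of_testBit_stack h
  obtain ⟨a, ha, i₃, h, hi₃⟩ := exists_of_testBit_stack h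
  obtain ⟨b, hb, i₂, h, hi₂⟩ := exists_of_testBit_stack h
  obtain ⟨c, hc, i₁, h, hi₁⟩ := exists_of_testBit_stack h
  obtain ⟨d, hd, i₀, h, hi₀⟩ := exists_of_testBit_stack h
  rw [Nat.testBit_one_eq_true_iff_self_eq_zero] at h
  refine ⟨by omega, by omega, fun k hk => ?_⟩
  interval_cases k <;> omega

theorem DigitsLE.le_mul {d n : ℕ} (h : DigitsLE d n) : n ≤ 1111 * d := by
  have h₀ : n % 10 ≤ d := by simpa using h.2 0
  have h₁ : n / 10 % 10 ≤ d := h.2 1 (by norm_num)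
  have h₂ : n / 100 % 10 ≤ d := h.2 2 (by norm_num)
  have h₃ : n / 1000 % 10 ≤ d := h.2 3 (by norm_num)
  have hsum : n = n % 10 + 10 * (n / 10 % 10) + 100 * (n / 100 % 10) + 1000 * (n / 1000 % 10) := by
    omega
  omega

theorem digit_add {m n : ℕ} (hm : DigitsLE 6 (m % 10 ^ 4)) (hn : DigitsLE 3 n) {k : ℕ}
    (hk : k < 4) : (m + n) / 10 ^ k % 10 = m / 10 ^ k % 10 + n / 10 ^ k % 10 := by
  obtain ⟨-, hm⟩ := hm
  obtain ⟨-, hn⟩ := hn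
  have hm₀ := hm 0
  have hm₁ := hm 1
  have hm₂ := hm 2
  have hm₃ := hm 3
  have hn₀ := hn 0
  have hn₁ := hn 1
  have hn₂ := hn 2
  have hn₃ := hn 3
  interval_cases k <;> omega

/-- The code of the statement that the point `n` has colour `j`. -/
def index (n j : ℕ) : ℕ := n % 10 ^ 4 + 10 ^ 4 * j

/-- The codes of the statements that `n` has a colour other than `j`. -/
def others (n j : ℕ) : List ℕ := ((List.range 4).erase j).map (index n)

/-- Here `X` is a set of statements known to fail; the result consists of the statements about
grid points whose three alternatives are in `X`. -/
def known (X : ℕ) : ℕ :=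
  force ((grid &&& X) ||| (grid &&& X) <<< 40000) fun Y =>
    grid &&& Y >>> 10000 &&& Y >>> 20000 &&& Y >>> 30000

/-- The `t` such that `t + l ∈ K` for all `l ∈ p`. -/
def common (K : ℕ) : List ℕ → ℕ
  | [] => 0
  | l :: p => fold (fun m Y => K >>> m &&& Y) (K >>> l) p

/-- Adds to `X` each statement whose truth, together with that of the statements in `K`, would
make a translate of a pattern in `P` monochromatic. -/
def propagate (P : List (List ℕ)) (K X : ℕ) : ℕ :=
  fold (fun p X => fold (fun l X => X ||| common K (p.erase l) <<< l) X p) X P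

/-- The set `X` together with the members of `L`. -/
def exclude (X : ℕ) (L : List ℕ) : ℕ := fold (fun i X => X ||| 1 <<< i) X L

/-- Propagation to a fixed point, followed by a case distinction on the colour of the first
point of the list; `true` means that every case ends in a contradiction. -/
def refute (P : List (List ℕ)) : ℕ → List ℕ → ℕ → Bool
  | 0, _, _ => false
  | fuel + 1, ns, X =>
    force (known X) fun K => bif !Nat.beq (K &&& X) 0 then true else
    force (propagate P K X) fun X' => bif !Nat.beq X' X then refute P fuel ns X' else
    match ns with
    | [] => false
    | n :: ns => (List.range 4).all fun j => refute P fuel ns (exclude X (others n j))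

variable {E : Type*} [AddCommGroup E] {b : Fin 4 → E} {f : E → Fin 4} {P : List (List ℕ)}

/-- The point whose coordinates with respect to `b` are the last four decimal digits of `n`, the
units digit being the coefficient of `b 0`. -/
def position (b : Fin 4 → E) (n : ℕ) : E := ∑ k : Fin 4, (n / 10 ^ (k : ℕ) % 10) • b k

theorem position_eq_of_mod_eq {m n : ℕ} (h : m % 10 ^ 4 = n % 10 ^ 4) :
    position b m = position b n := by
  refine Finset.sum_congr rfl fun k _ => ?_
  congr 1
  fin_cases k <;> simp <;> omega

theorem position_add {m n : ℕ} (hm : DigitsLE 6 (m % 10 ^ 4)) (hn : DigitsLE 3 n) :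
    position b (m + n) = position b m + position b n := by
  simp only [position, ← Finset.sum_add_distrib, ← add_smul, digit_add hm hn (Fin.isLt _)]

/-- The point coded by the last four digits of `i` has the colour given by the digits before. -/
def Takes (b : Fin 4 → E) (f : E → Fin 4) (i : ℕ) : Prop := (f (position b i) : ℕ) = i / 10 ^ 4

theorem takes_index {n j : ℕ} : Takes b f (index n j) ↔ (f (position b n) : ℕ) = j := by
  have hmod : index n j % 10 ^ 4 = n % 10 ^ 4 := by unfold index; omega
  have hdiv : index n j / 10 ^ 4 = j := by unfold index; omega
  rw [Takes, position_eq_of_mod_eq hmod, hdiv]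

theorem ne_of_takes_of_mem_others {n j i : ℕ} (hi : i ∈ others n j) (h : Takes b f i) :
    (f (position b n) : ℕ) ≠ j := by
  obtain ⟨j', hj', rfl⟩ := List.mem_map.1 hi
  rw [takes_index.1 h]
  exact ((List.nodup_range.mem_erase_iff).1 hj').1

/-- All statements in `X` about grid points are false for the colouring `f`. -/
def Excludes (b : Fin 4 → E) (f : E → Fin 4) (X : ℕ) : Prop :=
  ∀ i, grid.testBit i → X.testBit i → ¬ Takes b f i

/-- The members of `K` are true statements about grid points. -/
def Shows (b : Fin 4 → E) (f : E → Fin 4) (K : ℕ) : Prop :=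
  ∀ i, K.testBit i → grid.testBit i ∧ Takes b f i

/-- No translate of a pattern in `P` is monochromatic. -/
def Avoids (b : Fin 4 → E) (f : E → Fin 4) (P : List (List ℕ)) : Prop :=
  ∀ p ∈ P, ∀ x j, ∃ l ∈ p, f (x + position b l) ≠ j

theorem Excludes.shows_known {X : ℕ} (hX : Excludes b f X) : Shows b f (known X) := by
  intro i hi
  rw [known, force_eq] at hi
  simp only [Nat.testBit_and, Nat.testBit_or, Nat.testBit_shiftRight, Nat.testBit_shiftLeft,
    Bool.and_eq_true, Bool.or_eq_true, decide_eq_true_eq] at hi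
  obtain ⟨⟨⟨hgrid, h₁⟩, h₂⟩, h₃⟩ := hi
  refine ⟨hgrid, ?_⟩
  have hi4 := (digitsLE_of_testBit_grid hgrid).1
  have hne (i' : ℕ) (hmod : i' % 10 ^ 4 = i % 10 ^ 4) (h : grid.testBit i' ∧ X.testBit i') :
      i' / 10 ^ 4 < 4 ∧ (f (position b i) : ℕ) ≠ i' / 10 ^ 4 :=
    ⟨(digitsLE_of_testBit_grid h.1).1, position_eq_of_mod_eq (b := b) hmod ▸ hX i' h.1 h.2⟩
  replace h₁ := h₁.imp (hne _ (by omega)) fun h => And.intro h.1 (hne _ (by omega) h.2)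
  replace h₂ := h₂.imp (hne _ (by omega)) fun h => And.intro h.1 (hne _ (by omega) h.2)
  replace h₃ := h₃.imp (hne _ (by omega)) fun h => And.intro h.1 (hne _ (by omega) h.2)
  have hcolour := (f (position b i)).isLt
  unfold Takes
  omega

theorem testBit_of_testBit_common {K t m : ℕ} {p : List ℕ} (h : (common K p).testBit t)
    (hm : m ∈ p) : K.testBit (m + t) := by
  cases p with
  | nil => simp at hm
  | cons l p =>
    rw [common, fold_eq_foldr] at h
    induction p with
    | nil => simpa [Nat.testBit_shiftRight, List.mem_singleton.1 hm] using h
    | cons a p ih =>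
      rw [List.foldr_cons, Nat.testBit_and, Nat.testBit_shiftRight, Bool.and_eq_true] at h
      rcases List.mem_cons.1 hm with rfl | hm
      · exact ih h.2 List.mem_cons_self
      rcases List.mem_cons.1 hm with rfl | hm
      · exact h.1
      · exact ih h.2 (List.mem_cons_of_mem _ hm)

theorem not_takes_of_testBit_common {K t l : ℕ} {p : List ℕ} (hp : ∀ m ∈ p, DigitsLE 3 m)
    (hf : ∀ x j, ∃ m ∈ p, f (x + position b m) ≠ j) (hK : Shows b f K) (hl : l ∈ p)
    (ht : (common K (p.erase l)).testBit t) (hgrid : grid.testBit (l + t)) :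
    ¬ Takes b f (l + t) := by
  intro htakes
  obtain ⟨m, hm, hne⟩ := hf (position b (l + t) - position b l) (f (position b (l + t)))
  by_cases hml : m = l
  · simp [hml] at hne
  obtain ⟨hgrid', htakes'⟩ := hK _ <|
    testBit_of_testBit_common ht ((List.mem_erase_of_ne hml).2 hm)
  have hd := (digitsLE_of_testBit_grid hgrid).2
  have hd' := (digitsLE_of_testBit_grid hgrid').2
  have htranslate : position b (m + t) = position b (l + t) - position b l + position b m := by
    rw [sub_add_eq_add_sub, eq_sub_iff_add_eq, ← position_add hd' (hp l hl),
      ← position_add hd (hp m hm)]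
    congr 1
    omega
  have hcolour : (m + t) / 10 ^ 4 = (l + t) / 10 ^ 4 := by
    have hl := (hp l hl).le_mul
    have hm := (hp m hm).le_mul
    have hlt := hd.le_mul
    have hmt := hd'.le_mul
    omega
  rw [← htranslate] at hne
  exact hne (Fin.ext (by rw [htakes', htakes, hcolour]))

theorem Excludes.propagate {K X : ℕ} (hP : ∀ p ∈ P, ∀ l ∈ p, DigitsLE 3 l)
    (hf : Avoids b f P) (hK : Shows b f K) (hX : Excludes b f X) :
    Excludes b f (propagate P K X) := by
  have hpattern (p : List ℕ) (hp : p ∈ P) (Y : ℕ) (hY : Excludes b f Y) :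
      Excludes b f (fold (fun l Y => Y ||| common K (p.erase l) <<< l) Y p) := by
    intro i hgrid hi
    rcases testBit_fold_or hi with hi | ⟨l, hl, hi⟩
    · exact hY i hgrid hi
    · rw [Nat.testBit_shiftLeft, Bool.and_eq_true, decide_eq_true_eq] at hi
      obtain ⟨t, rfl⟩ := Nat.exists_eq_add_of_le hi.1
      rw [Nat.add_sub_cancel_left] at hi
      exact not_takes_of_testBit_common (hP p hp) (hf p hp) hK hl hi.2 hgrid
  rw [PlaneColoring.propagate, fold_eq_foldr]
  exact List.foldrRecOn P _ hX fun Y hY p hp => hpattern p hp Y hY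

theorem Excludes.exclude {X : ℕ} {L : List ℕ} (hX : Excludes b f X)
    (hL : ∀ i ∈ L, ¬ Takes b f i) : Excludes b f (exclude X L) := by
  intro i hgrid hi
  rcases testBit_fold_or hi with hi | ⟨j, hj, hi⟩
  · exact hX i hgrid hi
  · rw [Nat.one_shiftLeft, Nat.testBit_two_pow, decide_eq_true_eq] at hi
    exact hi ▸ hL j hj

theorem not_excludes_of_refute (hP : ∀ p ∈ P, ∀ l ∈ p, DigitsLE 3 l) (hf : Avoids b f P)
    {fuel : ℕ} {ns : List ℕ} {X : ℕ} (h : refute P fuel ns X) : ¬ Excludes b f X := by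
  induction fuel generalizing ns X with
  | zero => simp [refute] at h
  | succ fuel ih =>
    intro hX
    have hK := hX.shows_known
    unfold refute at h
    rw [force_eq] at h
    rcases Bool.eq_false_or_eq_true (!Nat.beq (known X &&& X) 0) with hconflict | hconflict
    · have hne : known X &&& X ≠ 0 := fun h0 => by simp [h0] at hconflict
      obtain ⟨i, hi⟩ := Nat.exists_testBit_of_ne_zero hne
      rw [Nat.testBit_and, Bool.and_eq_true] at hi
      exact hX i (hK i hi.1).1 hi.2 (hK i hi.1).2
    rw [hconflict, cond_false, force_eq] at h
    rcases Bool.eq_false_or_eq_true (!Nat.beq (propagate P (known X) X) X) with hnew | hnew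
    · rw [hnew, cond_true] at h
      exact ih h (hX.propagate hP hf hK)
    rw [hnew, cond_false] at h
    cases ns with
    | nil => exact Bool.false_ne_true h
    | cons n ns =>
      have hcase := List.all_eq_true.1 h _ (List.mem_range.2 (f (position b n)).isLt)
      exact ih hcase (hX.exclude fun i hi htakes => ne_of_takes_of_mem_others hi htakes rfl)

theorem exists_takes_of_refute (hP : ∀ p ∈ P, ∀ l ∈ p, DigitsLE 3 l) (hf : Avoids b f P)
    {fuel : ℕ} {ns L : List ℕ} (h : refute P fuel ns (exclude 0 L)) : ∃ i ∈ L, Takes b f i := by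
  by_contra! hL
  have hzero : Excludes b f 0 := fun i _ hi => by simp at hi
  exact not_excludes_of_refute hP hf h (hzero.exclude hL)

end Search
section Lattice

open Complex

/-- The cube root of unity `(-1 + i√3) / 2`. -/
noncomputable def ζ : ℂ := ⟨-1 / 2, √3 / 2⟩

/-- The number `(1 + i√11) / 2`, of absolute value `√3`. -/
noncomputable def θ : ℂ := ⟨1 / 2, √11 / 2⟩

theorem ζ_sq : ζ ^ 2 = -1 - ζ := by
  have h3 : √3 * √3 = 3 := Real.mul_self_sqrt (by norm_num)
  apply Complex.ext <;> simp [ζ, pow_two] <;> linarith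

theorem normSq_combination {p q r s : ℝ} (h : q * r = p * s) :
    normSq (p + q * ζ + (r * θ + s * (ζ * θ))) =
      p ^ 2 - p * q + q ^ 2 + 3 * (r ^ 2 - r * s + s ^ 2) + (p * r + q * s - q * r) := by
  have h3 : √3 ^ 2 = 3 := Real.sq_sqrt (by norm_num)
  have h11 : √11 ^ 2 = 11 := Real.sq_sqrt (by norm_num)
  simp only [normSq_apply, ζ, θ, add_re, add_im, mul_re, mul_im, ofReal_re, ofReal_im]
  linear_combination (√3 * √11 / 2 + 1 / 2) * h +
    ((q / 2 + s / 4) ^ 2 + s ^ 2 * √11 ^ 2 / 16) * h3 +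
    ((r / 2 - s / 4) ^ 2 + 3 * s ^ 2 / 16) * h11

theorem norm_ζ : ‖ζ‖ = 1 := by
  rw [← sq_eq_sq₀ (norm_nonneg _) zero_le_one, Complex.sq_norm]
  simpa using normSq_combination (p := 0) (q := 1) (r := 0) (s := 0) (by simp)

theorem norm_one_add_ζ : ‖1 + ζ‖ = 1 := by
  rw [show 1 + ζ = -ζ ^ 2 by rw [ζ_sq]; ring, norm_neg, norm_pow, norm_ζ, one_pow]

theorem exists_norm_eq_one_and_norm_sub_one_eq {r : ℝ} (h0 : 0 ≤ r) (h2 : r ≤ 2) :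
    ∃ w : ℂ, ‖w‖ = 1 ∧ ‖w - 1‖ = r := by
  have hsqrt : √(1 - r ^ 2 / 4) ^ 2 = 1 - r ^ 2 / 4 := Real.sq_sqrt (by nlinarith)
  refine ⟨⟨1 - r ^ 2 / 2, r * √(1 - r ^ 2 / 4)⟩, ?_, ?_⟩
  · rw [← sq_eq_sq₀ (norm_nonneg _) zero_le_one, Complex.sq_norm, normSq_mk]
    linear_combination r ^ 2 * hsqrt
  · rw [← sq_eq_sq₀ (norm_nonneg _) h0, Complex.sq_norm, normSq_apply]
    simp only [sub_re, sub_im, one_re, one_im]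
    linear_combination r ^ 2 * hsqrt

end Lattice

section Coloring

open Complex

/-- A colouring of the complex plane in which points at distance `1` have different colours. -/
def IsUnitColoring {C : Type*} (f : ℂ → C) : Prop := ∀ z w, dist z w = 1 → f z ≠ f w

theorem IsUnitColoring.comp_affine {C : Type*} {f : ℂ → C} (hf : IsUnitColoring f) (c : ℂ) {u : ℂ}
    (hu : ‖u‖ = 1) : IsUnitColoring fun z => f (c + u * z) := by
  intro z w h
  apply hf
  rwa [dist_add_left, dist_eq_norm, ← mul_sub, norm_mul, hu, one_mul, ← dist_eq_norm]

theorem IsUnitColoring.perm_sub {C : Type*} {f : ℂ → C} (hf : IsUnitColoring f)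
    (σ : Equiv.Perm C) (c : ℂ) : IsUnitColoring fun z => σ (f (z - c)) :=
  fun z w h => σ.injective.ne (hf _ _ (by rwa [dist_sub_right]))

theorem exists_perm_eq_zero_one_two {i j k : Fin 4} (hij : i ≠ j) (hik : i ≠ k) (hjk : j ≠ k) :
    ∃ σ : Equiv.Perm (Fin 4), σ i = 0 ∧ σ j = 1 ∧ σ k = 2 := by
  have hx : Function.Injective ![i, j, k] := by
    intro a b
    fin_cases a <;> fin_cases b <;> simp [hij, hik, hjk, hij.symm, hik.symm, hjk.symm]
  have hy : Function.Injective ![(0 : Fin 4), 1, 2] := by decide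
  obtain ⟨σ, hσ⟩ := (Equiv.Perm.isMultiplyPretransitive (Fin 4) 3).exists_smul_eq ⟨_, hx⟩ ⟨_, hy⟩
  have hσ' (a : Fin 3) := DFunLike.congr_fun hσ a
  exact ⟨σ, hσ' 0, hσ' 1, hσ' 2⟩

variable {f : ℂ → Fin 4}

theorem IsUnitColoring.exists_position_ne (hf : IsUnitColoring f) {b : Fin 4 → ℂ} {p : List ℕ}
    {m n : ℕ} (hm : m ∈ p) (hn : n ∈ p) (h : dist (position b m) (position b n) = 1) (x : ℂ)
    (j : Fin 4) : ∃ l ∈ p, f (x + position b l) ≠ j := by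
  by_contra! hmono
  refine hf (x + position b m) (x + position b n) (by rwa [dist_add_left]) ?_
  rw [hmono m hm, hmono n hn]

/-- Basis of a lattice that is fine enough to contain, besides the hexagonal lattice spanned by
`1` and `ζ`, points at distance `1` obtained from it by irrational rotations. -/
noncomputable def fineBasis : Fin 4 → ℂ := ![θ / 3, ζ * θ / 3, 1 / 3, ζ / 3]

/-- The difference of the coefficients of `b k` in `position b m` and `position b n`. -/
def digitDiff (m n k : ℕ) : ℤ := (m / 10 ^ k % 10 : ℕ) - (n / 10 ^ k % 10 : ℕ)

/-- The integer form of `normSq_combination` for the points `m` and `n`. -/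
abbrev IsUnitStep (m n : ℕ) : Prop :=
  let r := digitDiff m n 0
  let s := digitDiff m n 1
  let p := digitDiff m n 2
  let q := digitDiff m n 3
  q * r = p * s ∧
    p ^ 2 - p * q + q ^ 2 + 3 * (r ^ 2 - r * s + s ^ 2) + (p * r + q * s - q * r) = 9

theorem IsUnitStep.dist_eq_one {m n : ℕ} (h : IsUnitStep m n) :
    dist (position fineBasis m) (position fineBasis n) = 1 := by
  obtain ⟨hcross, hnorm⟩ := h
  have hsub : position fineBasis m - position fineBasis n =
      ((digitDiff m n 2 : ℝ) + (digitDiff m n 3 : ℝ) * ζ +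
        ((digitDiff m n 0 : ℝ) * θ + (digitDiff m n 1 : ℝ) * (ζ * θ))) / (3 : ℝ) := by
    have hcast (k : ℕ) : ((digitDiff m n k : ℝ) : ℂ) =
        (m / 10 ^ k % 10 : ℕ) - (n / 10 ^ k % 10 : ℕ) := by
      simp only [digitDiff, Int.cast_sub, Int.cast_natCast, ofReal_sub, ofReal_natCast]
    simp [position, fineBasis, hcast, Fin.sum_univ_four]
    ring
  rw [dist_eq_norm, ← sq_eq_sq₀ (norm_nonneg _) zero_le_one, Complex.sq_norm, hsub, normSq_div,
    normSq_combination (by exact_mod_cast hcross), normSq_ofReal]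
  have hnorm' := congrArg (Int.cast : ℤ → ℝ) hnorm
  push_cast at hnorm'
  rw [hnorm']
  norm_num

/-- Pairs of points whose distance with respect to `fineBasis` is `1`. -/
def finePatterns : List (List ℕ) :=
  [[0, 12], [0, 21], [0, 201], [0, 300], [0, 2010], [0, 2211], [0, 3000], [0, 3300], [1, 10],
    [1, 300], [10, 3000], [11, 3300], [12, 1200], [21, 2100], [110, 1001]]

theorem digitsLE_of_mem_finePatterns : ∀ p ∈ finePatterns, ∀ l ∈ p, DigitsLE 3 l := by
  decide

theorem pairwise_isUnitStep_of_mem_finePatterns :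
    ∀ p ∈ finePatterns, 2 ≤ p.length ∧ p.Pairwise IsUnitStep := by
  decide

theorem IsUnitColoring.avoids_finePatterns (hf : IsUnitColoring f) :
    Avoids fineBasis f finePatterns := by
  intro p hp
  obtain ⟨hlength, hpairwise⟩ := pairwise_isUnitStep_of_mem_finePatterns p hp
  match p with
  | [] | [_] => simp at hlength
  | m :: n :: p =>
    exact hf.exists_position_ne (by simp) (by simp)
      (List.rel_of_pairwise_cons hpairwise List.mem_cons_self).dist_eq_one

-- The list of branching points comes from a computer search.
theorem refute_finePatterns :
    refute finePatterns 300 [3343, 3334, 3323, 3344, 3034, 3345, 3632, 3342, 2133, 1542, 6143, 40]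
      (exclude 0 (others 3633 0 ++ others 6333 0 ++ others 33 0 ++ others 3333 1 ++
        others 3033 2)) := by
  decide +kernel

theorem IsUnitColoring.not_monochromatic_ζ_pow (hf : IsUnitColoring f) :
    ¬ (f 1 = f ζ ∧ f ζ = f (ζ ^ 2)) := by
  rintro ⟨h1, h2⟩
  obtain ⟨σ, hσ1, hσ0, hσ_neg⟩ := exists_perm_eq_zero_one_two
    (hf 1 0 (by simp)) (h1 ▸ hf ζ (-1) (by simpa [dist_eq_norm, add_comm] using norm_one_add_ζ))
    (hf 0 (-1) (by simp))
  have hvalue (n : ℕ) (z : ℂ) (h : position fineBasis n - position fineBasis 3333 = z) :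
      σ (f (position fineBasis n - position fineBasis 3333)) = σ (f z) := by
    rw [h]
  obtain ⟨i, hi, htakes⟩ := exists_takes_of_refute digitsLE_of_mem_finePatterns
    (hf.perm_sub σ (position fineBasis 3333)).avoids_finePatterns refute_finePatterns
  simp only [List.mem_append, or_assoc] at hi
  rcases hi with hi | hi | hi | hi | hi <;> apply ne_of_takes_of_mem_others hi htakes
  · rw [hvalue 3633 1, hσ1] <;> simp [position, fineBasis, Fin.sum_univ_four]; ring
  · rw [hvalue 6333 ζ, ← h1, hσ1] <;> simp [position, fineBasis, Fin.sum_univ_four]; ring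
  · rw [hvalue 33 (ζ ^ 2), ← h2, ← h1, hσ1] <;>
      simp [position, fineBasis, Fin.sum_univ_four, ζ_sq]; ring
  · rw [hvalue 3333 0, hσ0] <;> simp
  · rw [hvalue 3033 (-1), hσ_neg] <;> simp [position, fineBasis, Fin.sum_univ_four]

theorem IsUnitColoring.exists_position_ne_of_triangle (hf : IsUnitColoring f) {b : Fin 4 → ℂ}
    {p : List ℕ} {k m n : ℕ} (hkp : k ∈ p) (hmp : m ∈ p) (hnp : n ∈ p) {c u : ℂ} (hu : ‖u‖ = 1)
    (hk : position b k = c + u) (hm : position b m = c + u * ζ)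
    (hn : position b n = c + u * ζ ^ 2) (x : ℂ) (j : Fin 4) :
    ∃ l ∈ p, f (x + position b l) ≠ j := by
  by_contra! hmono
  have hk' := hmono k hkp
  have hm' := hmono m hmp
  have hn' := hmono n hnp
  rw [hk, ← add_assoc] at hk'
  rw [hm, ← add_assoc] at hm'
  rw [hn, ← add_assoc] at hn'
  apply (hf.comp_affine (x + c) hu).not_monochromatic_ζ_pow
  rw [mul_one, hk', hm', hn']
  exact ⟨rfl, rfl⟩

/-- Basis of the hexagonal lattice, padded to the four vectors that `position` expects. -/
noncomputable def hexBasis : Fin 4 → ℂ := ![1, ζ, 0, 0]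

theorem position_hexBasis (n : ℕ) :
    position hexBasis n = (n % 10 : ℕ) + (n / 10 % 10 : ℕ) * ζ := by
  simp [position, hexBasis, Fin.sum_univ_four]

/-- Three unit distances and two triangles. -/
def hexPatterns : List (List ℕ) := [[0, 1], [0, 10], [0, 11], [0, 12, 21], [1, 10, 22]]

theorem digitsLE_of_mem_hexPatterns : ∀ p ∈ hexPatterns, ∀ l ∈ p, DigitsLE 3 l := by
  decide

theorem IsUnitColoring.avoids_hexPatterns (hf : IsUnitColoring f) :
    Avoids hexBasis f hexPatterns := by
  intro p hp
  simp only [hexPatterns, List.mem_cons, List.not_mem_nil, or_false] at hp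
  rcases hp with rfl | rfl | rfl | rfl | rfl
  · refine hf.exists_position_ne (m := 1) (n := 0) (by simp) (by simp) ?_
    simp [position_hexBasis]
  · refine hf.exists_position_ne (m := 10) (n := 0) (by simp) (by simp) ?_
    simp [position_hexBasis, norm_ζ]
  · refine hf.exists_position_ne (m := 11) (n := 0) (by simp) (by simp) ?_
    simp [position_hexBasis, norm_one_add_ζ]
  · refine hf.exists_position_ne_of_triangle (k := 12) (m := 21) (n := 0) (c := 1 + ζ) (u := 1)
      (by simp) (by simp) (by simp) norm_one ?_ ?_ ?_ <;>
    simp [position_hexBasis, ζ_sq] <;> ring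
  · refine hf.exists_position_ne_of_triangle (k := 10) (m := 1) (n := 22) (c := 1 + ζ) (u := -1)
      (by simp) (by simp) (by simp) (by simp) ?_ ?_ ?_ <;>
    simp [position_hexBasis, ζ_sq]; ring

theorem IsUnitColoring.exists_perm_takes (hf : IsUnitColoring f) : ∃ σ : Equiv.Perm (Fin 4),
    σ (f 0) = 0 ∧ ∀ {fuel : ℕ} {ns L : List ℕ},
      refute hexPatterns fuel ns (exclude 0 (others 33 0 ++ others 34 1 ++ others 44 2 ++ L)) →
        ∃ i ∈ L, Takes hexBasis (fun z => σ (f (z - position hexBasis 33))) i := by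
  obtain ⟨σ, hσ0, hσ1, hσ2⟩ := exists_perm_eq_zero_one_two
    (hf 0 1 (by simp)) (hf 0 (1 + ζ) (by simpa [dist_eq_norm'] using norm_one_add_ζ))
    (hf 1 (1 + ζ) (by simp [norm_ζ]))
  refine ⟨σ, hσ0, fun {fuel ns L} h => ?_⟩
  obtain ⟨i, hi, htakes⟩ := exists_takes_of_refute digitsLE_of_mem_hexPatterns
    (hf.perm_sub σ (position hexBasis 33)).avoids_hexPatterns h
  have hvalue (n : ℕ) (z : ℂ) (h : position hexBasis n - position hexBasis 33 = z) :
      σ (f (position hexBasis n - position hexBasis 33)) = σ (f z) := by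
    rw [h]
  simp only [List.mem_append, or_assoc] at hi
  rcases hi with hi | hi | hi | hi
  · refine absurd ?_ (ne_of_takes_of_mem_others hi htakes)
    rw [hvalue 33 0, hσ0] <;> simp
  · refine absurd ?_ (ne_of_takes_of_mem_others hi htakes)
    rw [hvalue 34 1, hσ1] <;> simp [position_hexBasis]; ring
  · refine absurd ?_ (ne_of_takes_of_mem_others hi htakes)
    rw [hvalue 44 (1 + ζ), hσ2] <;> simp [position_hexBasis]; ring
  · exact ⟨i, hi, htakes⟩

/-- The directions of three antipodal pairs `{2 * u, -(2 * u)}` around the origin. -/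
noncomputable def direction : Fin 3 → ℂ := ![1, ζ, 1 + ζ]

theorem norm_direction (t : Fin 3) : ‖direction t‖ = 1 := by
  fin_cases t
  exacts [norm_one, norm_ζ, norm_one_add_ζ]

/-- The codes of `2 * direction t` and `-(2 * direction t)`, with the origin at `33`. -/
def antipode : Fin 3 → Bool → ℕ
  | 0, true => 35
  | 0, false => 31
  | 1, true => 53
  | 1, false => 13
  | 2, true => 55
  | 2, false => 11

theorem position_antipode_true (t : Fin 3) :
    position hexBasis (antipode t true) - position hexBasis 33 = 2 * direction t := by
  fin_cases t <;> simp [position_hexBasis, antipode, direction] <;> ring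

theorem position_antipode_false (t : Fin 3) :
    position hexBasis (antipode t false) - position hexBasis 33 = -(2 * direction t) := by
  fin_cases t <;> simp [position_hexBasis, antipode, direction] <;> ring

theorem refute_one_of_each_antipodal_pair :
    ∀ s : Fin 3 → Bool, refute hexPatterns 300 [32, 21, 45]
      (exclude 0 (others 33 0 ++ others 34 1 ++ others 44 2 ++
        [index (antipode 0 (s 0)) 0, index (antipode 1 (s 1)) 0, index (antipode 2 (s 2)) 0])) := by
  decide +kernel

theorem refute_antipodal_pair_ne :
    ∀ t : Fin 3, ∀ j ∈ List.range 4, refute hexPatterns 300 [32, 21, 45]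
      (exclude 0 (others 33 0 ++ others 34 1 ++ others 44 2 ++
        ([index (antipode 0 true) 0, index (antipode 0 false) 0] ++ others (antipode t true) j ++
          [index (antipode t false) j]))) := by
  decide +kernel

theorem IsUnitColoring.exists_antipodal_eq_center (hf : IsUnitColoring f) :
    ∃ t, f (2 * direction t) = f 0 ∧ f (-(2 * direction t)) = f 0 := by
  by_contra! hne
  have hexists (t : Fin 3) :
      ∃ s, f (position hexBasis (antipode t s) - position hexBasis 33) ≠ f 0 := by
    rw [Bool.exists_bool, position_antipode_true, position_antipode_false, or_comm]
    exact not_or_of_imp (hne t)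
  choose s hs using hexists
  obtain ⟨σ, hσ, htakes⟩ := hf.exists_perm_takes
  have hcenter (t : Fin 3) : ¬ Takes hexBasis (fun z => σ (f (z - position hexBasis 33)))
      (index (antipode t (s t)) 0) := by
    rw [takes_index]
    exact fun h => hs t (σ.injective ((Fin.ext h).trans hσ.symm))
  obtain ⟨i, hi, htrue⟩ := htakes (refute_one_of_each_antipodal_pair s)
  simp only [List.mem_cons, List.not_mem_nil, or_false] at hi
  rcases hi with rfl | rfl | rfl <;> exact hcenter _ htrue

theorem IsUnitColoring.antipodal_eq (hf : IsUnitColoring f) (hpos : f 2 ≠ f 0)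
    (hneg : f (-2) ≠ f 0) (t : Fin 3) : f (2 * direction t) = f (-(2 * direction t)) := by
  obtain ⟨σ, hσ, htakes⟩ := hf.exists_perm_takes
  have hcenter (s : Bool)
      (h : Takes hexBasis (fun z => σ (f (z - position hexBasis 33))) (index (antipode 0 s) 0)) :
      f (position hexBasis (antipode 0 s) - position hexBasis 33) = f 0 :=
    σ.injective ((Fin.ext (takes_index.1 h)).trans hσ.symm)
  obtain ⟨i, hi, htrue⟩ := htakes <|
    refute_antipodal_pair_ne t _ (List.mem_range.2 (σ (f (2 * direction t))).isLt)
  simp only [List.mem_append, List.mem_cons, List.not_mem_nil, or_false, or_assoc] at hi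
  rcases hi with rfl | rfl | hi | rfl
  · exact absurd (by simpa [position_antipode_true, direction] using hcenter true htrue) hpos
  · exact absurd (by simpa [position_antipode_false, direction] using hcenter false htrue) hneg
  · exact absurd (by rw [position_antipode_true]) (ne_of_takes_of_mem_others hi htrue)
  · rw [takes_index, position_antipode_false] at htrue
    exact σ.injective (Fin.ext htrue.symm)

theorem IsUnitColoring.apply_two_eq_apply_neg_two (hf : IsUnitColoring f) : f 2 = f (-2) := by
  obtain ⟨ρ, hρ, hρ'⟩ := exists_norm_eq_one_and_norm_sub_one_eq (r := 1 / 2) (by simp) (by norm_num)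
  obtain ⟨t, hpos, hneg⟩ := (hf.comp_affine 0 hρ).exists_antipodal_eq_center
  have hdist (v : ℂ) (hv : ‖v‖ = 2) : dist v (ρ * v) = 1 := by
    rw [dist_eq_norm', ← sub_one_mul, norm_mul, hρ', hv]
    norm_num
  simp only [zero_add, mul_zero] at hpos hneg
  have hpos' : f (2 * direction t) ≠ f 0 := hpos ▸ hf _ _ (hdist _ (by simp [norm_direction]))
  have hneg' : f (-(2 * direction t)) ≠ f 0 := hneg ▸ hf _ _ (hdist _ (by simp [norm_direction]))
  have hantipodal (t' : Fin 3) :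
      f (2 * (direction t * direction t')) = f (-(2 * (direction t * direction t'))) := by
    have h := (hf.comp_affine 0 (norm_direction t)).antipodal_eq
      (by simpa [mul_comm (direction t)] using hpos')
      (by simpa [mul_comm (direction t)] using hneg') t'
    simpa [mul_left_comm (direction t)] using h
  have hζ : ζ * (1 + ζ) = -1 := by linear_combination ζ_sq
  fin_cases t
  · simpa [direction] using hantipodal 0
  · simpa [direction, hζ] using (hantipodal 2).symm
  · simpa [direction, mul_comm _ ζ, hζ] using (hantipodal 1).symm

theorem IsUnitColoring.apply_add_four_mul (hf : IsUnitColoring f) (c : ℂ) {u : ℂ} (hu : ‖u‖ = 1) :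
    f (c + 4 * u) = f c := by
  convert (hf.comp_affine (c + 2 * u) hu).apply_two_eq_apply_neg_two using 2 <;> ring

theorem not_isUnitColoring (f : ℂ → Fin 4) : ¬ IsUnitColoring f := by
  intro hf
  obtain ⟨w, hw, hw'⟩ := exists_norm_eq_one_and_norm_sub_one_eq (r := 1 / 4) (by simp) (by norm_num)
  refine hf (0 + 4 * w) (0 + 4 * 1) ?_ ?_
  · rw [dist_add_left, dist_eq_norm, ← mul_sub, norm_mul, hw']
    norm_num
  · rw [hf.apply_add_four_mul 0 hw, hf.apply_add_four_mul 0 norm_one]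

end Coloring

end PlaneColoring

theorem stmt_19 :
    ¬ (∃ c : EuclideanSpace ℝ (Fin 2) → Fin 4, ∀ x y : EuclideanSpace ℝ (Fin 2), dist x y = 1 → c x ≠ c y) := by
  rintro ⟨c, hc⟩
  let e := Complex.orthonormalBasisOneI.repr
  exact PlaneColoring.not_isUnitColoring (fun z => c (e z)) fun z w h =>
    hc (e z) (e w) (by rwa [e.dist_map])
end
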